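/- arXiv:2306.03698 — 2 statements merged into one kernel-verified Lean document; each statement's English description precedes it below -/
import Mathlib

section
/- Let L ∈ ℕ, let φ be an L-layer MPNN model, and let ψ : ℝ^{d_L} → ℝ^d be Lipschitz. Then ‖h^{(L)}_α − h^{(L)}_β‖₂ ≤ C_φ · W^L(α,β) for all α,β ∈ M_L, and ‖h_μ − h_ν‖₂ ≤ C_{(φ,ψ)} · δW^L(μ,ν) for all Borel probability measures μ,ν on M_L. Moreover, the analogous inequalities hold on M = M_∞ and on P(M) with the metrics d_W and δW^∞, with an additional factor of L in the Lipschitz constants. -/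
open MeasureTheory Set

noncomputable section

/-- Borel measures of total mass at most one on `X`. -/
abbrev SubProb (X : Type) [MeasurableSpace X] : Type :=
  {μ : Measure X // μ Set.univ ≤ 1}

/-- The weak topology on `SubProb X`: the coarsest topology making all maps
`μ ↦ ∫ f dμ` for bounded continuous `f` continuous. -/
def subProbWeakTop (X : Type) [MeasurableSpace X] [TopologicalSpace X] :
    TopologicalSpace (SubProb X) :=
  ⨅ f : BoundedContinuousFunction X ℝ,
    TopologicalSpace.induced (fun μ => ∫ x, f x ∂μ.val) inferInstance

/-- Iterated degree measure spaces with their (weak) topologies: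
`M 0` is a one-point space and `M (h+1)` is the space of Borel measures of total
mass at most one on `M h` with the weak topology. -/
def IDM : ℕ → Σ X : Type, TopologicalSpace X
  | 0 => ⟨Unit, inferInstance⟩
  | (h+1) =>
      let p := IDM h
      ⟨@SubProb p.1 (@borel p.1 p.2), @subProbWeakTop p.1 (@borel p.1 p.2) p.2⟩

/-- The space of iterated degree measures of depth `h`. -/
def M (h : ℕ) : Type := (IDM h).1

instance (h : ℕ) : TopologicalSpace (M h) := (IDM h).2
instance (h : ℕ) : MeasurableSpace (M h) := borel (M h)
instance (h : ℕ) : BorelSpace (M h) := ⟨rfl⟩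

def toSub {h : ℕ} (α : M (h+1)) : SubProb (M h) := α
def ofSub {h : ℕ} (μ : SubProb (M h)) : M (h+1) := μ
/-- The underlying measure of an iterated degree measure. -/
def toMeas {h : ℕ} (α : M (h+1)) : Measure (M h) := (toSub α).1

def uwAux {X : Type _} [MeasurableSpace X] (d : X → X → ℝ) (μ ν : Measure X) : ℝ :=
  (μ Set.univ).toReal - (ν Set.univ).toReal +
    sInf {r : ℝ | ∃ γ : Measure (X × X), γ Set.univ ≤ 1 ∧
      γ.map Prod.fst ≤ μ ∧ γ.map Prod.snd = ν ∧ r = ∫ p, d p.1 p.2 ∂γ}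

open Classical in
/-- The unbalanced Wasserstein distance w.r.t. a distance function `d`:
`‖μ‖ - ‖ν‖` plus the optimal transport cost over sub-couplings, where w.l.o.g.
`‖μ‖ ≥ ‖ν‖`. -/
def uwDist {X : Type _} [MeasurableSpace X] (d : X → X → ℝ) (μ ν : Measure X) : ℝ :=
  if ν Set.univ ≤ μ Set.univ then uwAux d μ ν else uwAux d ν μ

/-- The classical Wasserstein distance (over couplings) w.r.t. a cost `d`. -/
def wassersteinDist {X : Type _} [MeasurableSpace X] (d : X → X → ℝ)
    (μ ν : Measure X) : ℝ :=
  sInf {r : ℝ | ∃ γ : Measure (X × X),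
    γ.map Prod.fst = μ ∧ γ.map Prod.snd = ν ∧ r = ∫ p, d p.1 p.2 ∂γ}

/-- The iterated unbalanced Wasserstein metrics `W^h` on the spaces `M h`. -/
def Wdist : (h : ℕ) → M h → M h → ℝ
  | 0, _, _ => 0
  | (h+1), α, β => uwDist (Wdist h) (toMeas α) (toMeas β)

/-- Borel probability measures on `X`. -/
abbrev ProbM (X : Type) [MeasurableSpace X] : Type :=
  {μ : Measure X // IsProbabilityMeasure μ}

/-- The weak topology on Borel probability measures. -/
def probWeakTop (X : Type) [MeasurableSpace X] [TopologicalSpace X] :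
    TopologicalSpace (ProbM X) :=
  ⨅ f : BoundedContinuousFunction X ℝ,
    TopologicalSpace.induced (fun μ => ∫ x, f x ∂μ.val) inferInstance

/-- The projections `p_{h+1,h} : M (h+1) → M h`, given by pushforward. -/
def projM : (h : ℕ) → M (h+1) → M h
  | 0, _ => ()
  | (h+1), α => ofSub ⟨(toMeas α).map (projM h), by
      by_cases hf : AEMeasurable (projM h) (toMeas α)
      · rw [Measure.map_apply_of_aemeasurable hf MeasurableSet.univ, Set.preimage_univ]
        exact (toSub α).2
      · rw [Measure.map_of_not_aemeasurable hf]
        simp⟩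

/-- The inverse limit `M_∞` of the spaces `M h` along the projections,
with the subspace topology of the product topology. -/
abbrev Minf : Type := {α : (h : ℕ) → M h // ∀ h, projM h (α (h+1)) = α h}

instance : MeasurableSpace Minf := borel Minf
instance : BorelSpace Minf := ⟨rfl⟩
/-- An MPNN model: dimensions `d t`, an initial feature `φ₀ ∈ ℝ^{d 0}`, and
continuous update functions `φ t : ℝ^{d t} → ℝ^{d (t+1)}`. An `L`-layer model uses
the layers `φ 0, …, φ (L-1)`. -/
structure MPNNModel where
  d : ℕ → ℕ
  φ₀ : EuclideanSpace ℝ (Fin (d 0))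
  φ : (t : ℕ) → EuclideanSpace ℝ (Fin (d t)) → EuclideanSpace ℝ (Fin (d (t+1)))
  cont : ∀ t, Continuous (φ t)

/-- MPNN features on iterated degree measures: `h^{(0)}_α = φ₀` and
`h^{(t+1)}_α = φ_t (∫ h^{(t)}_β dα(β))`. -/
def idmFeat (m : MPNNModel) : (t : ℕ) → M t → EuclideanSpace ℝ (Fin (m.d t))
  | 0, _ => m.φ₀
  | (t+1), α => m.φ t (∫ β, idmFeat m t β ∂(toMeas α))


/-- `d_W(α,β) = sup_h (1/h) · W^h(α_h, β_h)` on the inverse limit. -/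
def dWinf (α β : Minf) : ℝ := ⨆ h : ℕ, ((h : ℝ))⁻¹ * Wdist h (α.1 h) (β.1 h)

/-- The set `{∫ h^{(t)}_β dα : α ∈ M (t+1)}` of attainable aggregated inputs of the
layer function `φ t`. -/
def aggSet (m : MPNNModel) (t : ℕ) : Set (EuclideanSpace ℝ (Fin (m.d t))) :=
  {z | ∃ α : M (t+1), z = ∫ β, idmFeat m t β ∂(toMeas α)}

/-- The set `{∫ h^{(L)}_β dν : ν ∈ P(M L)}` of attainable aggregated inputs of the
readout function. -/
def probAgg (m : MPNNModel) (L : ℕ) : Set (EuclideanSpace ℝ (Fin (m.d L))) :=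
  {z | ∃ ν : ProbM (M L), z = ∫ β, idmFeat m L β ∂ν.1}

/-- The Lipschitz constant `C_φ` of an MPNN model, built from the layerwise
Lipschitz constants `c t` and the bounds `B t` on the feature values:
`C_{φ₀} = 0` and `C_{φ_{t+1}} = c t · (B t + C_{φ_t})`. -/
def mpnnC (c : ℕ → NNReal) (B : ℕ → ℝ) : ℕ → ℝ
  | 0 => 0
  | (t+1) => (c t : ℝ) * (B t + mpnnC c B t)

/-- A bounded symmetric measurable cost function. -/
structure GoodCost {X : Type} [MeasurableSpace X] (d : X → X → ℝ) : Prop where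
  nn : ∀ x y, 0 ≤ d x y
  le1 : ∀ x y, d x y ≤ 1
  symm : ∀ x y, d x y = d y x
  meas : Measurable (fun p : X × X => d p.1 p.2)

theorem GoodCost.integrable {X : Type} [MeasurableSpace X] {d : X → X → ℝ} (h : GoodCost d)
    (γ : Measure (X × X)) [IsFiniteMeasure γ] : Integrable (fun p : X × X => d p.1 p.2) γ := by
  refine Integrable.of_bound h.meas.aestronglyMeasurable 1 (Filter.Eventually.of_forall fun p => ?_)
  rw [Real.norm_eq_abs, abs_of_nonneg (h.nn _ _)]
  exact h.le1 _ _

theorem finite_of_map_fst_le {X : Type} [MeasurableSpace X] {γ : Measure (X × X)} {μ : Measure X}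
    [IsFiniteMeasure μ] (h : γ.map Prod.fst ≤ μ) : IsFiniteMeasure γ := by
  refine ⟨?_⟩
  have := h Set.univ
  rw [Measure.map_apply measurable_fst MeasurableSet.univ, Set.preimage_univ] at this
  exact this.trans_lt (measure_lt_top _ _)

theorem map_univ_fst {X : Type} [MeasurableSpace X] (γ : Measure (X × X)) :
    (γ.map Prod.fst) Set.univ = γ Set.univ := by
  rw [Measure.map_apply measurable_fst MeasurableSet.univ, Set.preimage_univ]

theorem map_univ_snd {X : Type} [MeasurableSpace X] (γ : Measure (X × X)) :
    (γ.map Prod.snd) Set.univ = γ Set.univ := by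
  rw [Measure.map_apply measurable_snd MeasurableSet.univ, Set.preimage_univ]

/-- Extend a partial coupling to a sub-coupling. -/
theorem extend_coupling {X : Type} [MeasurableSpace X] {μ ν : Measure X}
    [IsFiniteMeasure μ] [IsFiniteMeasure ν] (hm : ν Set.univ ≤ μ Set.univ)
    {γ : Measure (X × X)} (h1 : γ.map Prod.fst ≤ μ) (h2 : γ.map Prod.snd ≤ ν) :
    ∃ γ' : Measure (X × X), γ ≤ γ' ∧ γ'.map Prod.fst ≤ μ ∧ γ'.map Prod.snd = ν := by
  have := finite_of_map_fst_le h1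
  set α := μ - γ.map Prod.fst with hα
  set β := ν - γ.map Prod.snd with hβ
  have e1 : α + γ.map Prod.fst = μ := Measure.sub_add_cancel_of_le h1
  have e2 : β + γ.map Prod.snd = ν := Measure.sub_add_cancel_of_le h2
  have : IsFiniteMeasure α := ⟨by
    have : α Set.univ ≤ μ Set.univ := by rw [← e1]; simp
    exact this.trans_lt (measure_lt_top _ _)⟩
  have : IsFiniteMeasure β := ⟨by
    have : β Set.univ ≤ ν Set.univ := by rw [← e2]; simp
    exact this.trans_lt (measure_lt_top _ _)⟩
  have hle : β Set.univ ≤ α Set.univ := by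
    have a1 : α Set.univ + γ Set.univ = μ Set.univ := by
      rw [← e1, Measure.add_apply, map_univ_fst]
    have a2 : β Set.univ + γ Set.univ = ν Set.univ := by
      rw [← e2, Measure.add_apply, map_univ_snd]
    rw [← a1, ← a2] at hm
    exact (ENNReal.add_le_add_iff_right (measure_ne_top _ _)).1 hm
  refine ⟨γ + (α Set.univ)⁻¹ • α.prod β, Measure.le_add_right le_rfl, ?_, ?_⟩
  · rw [Measure.map_add _ _ measurable_fst, Measure.map_smul, Measure.map_fst_prod, smul_smul]
    conv_rhs => rw [← e1, add_comm]
    gcongr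
    have : (α Set.univ)⁻¹ * β Set.univ ≤ 1 := by
      calc _ ≤ (α Set.univ)⁻¹ * α Set.univ := by gcongr
        _ ≤ 1 := ENNReal.inv_mul_le_one _
    calc ((α Set.univ)⁻¹ * β Set.univ) • α ≤ (1 : ENNReal) • α := by
          refine Measure.le_iff.2 fun s _ => ?_
          simp only [Measure.smul_apply, smul_eq_mul]
          gcongr
      _ = α := one_smul _ _
  · rw [Measure.map_add _ _ measurable_snd, Measure.map_smul, Measure.map_snd_prod, smul_smul]
    conv_rhs => rw [← e2, add_comm]
    congr 1
    by_cases h0 : α Set.univ = 0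
    · have : β = 0 := Measure.measure_univ_eq_zero.1 (le_antisymm (h0 ▸ hle) bot_le)
      simp [this]
    · rw [ENNReal.inv_mul_cancel h0 (measure_ne_top _ _), one_smul]

theorem uwSet_bdd {X : Type} [MeasurableSpace X] {d : X → X → ℝ} (hd : GoodCost d)
    (μ ν : Measure X) : BddBelow {r : ℝ | ∃ γ : Measure (X × X), γ Set.univ ≤ 1 ∧
      γ.map Prod.fst ≤ μ ∧ γ.map Prod.snd = ν ∧ r = ∫ p, d p.1 p.2 ∂γ} :=
  ⟨0, by rintro r ⟨γ, -, -, -, rfl⟩; exact integral_nonneg fun p => hd.nn _ _⟩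

theorem uwSet_nonempty {X : Type} [MeasurableSpace X] (d : X → X → ℝ)
    {μ ν : Measure X} (hμ : μ Set.univ ≤ 1) (hν : ν Set.univ ≤ 1)
    (hm : ν Set.univ ≤ μ Set.univ) :
    {r : ℝ | ∃ γ : Measure (X × X), γ Set.univ ≤ 1 ∧
      γ.map Prod.fst ≤ μ ∧ γ.map Prod.snd = ν ∧ r = ∫ p, d p.1 p.2 ∂γ}.Nonempty := by
  have : IsFiniteMeasure μ := ⟨hμ.trans_lt ENNReal.one_lt_top⟩
  have : IsFiniteMeasure ν := ⟨hν.trans_lt ENNReal.one_lt_top⟩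
  obtain ⟨γ, -, h1, h2⟩ := extend_coupling (μ := μ) (ν := ν) hm (γ := 0)
    (by simp [Measure.zero_le]) (by simp [Measure.zero_le])
  exact ⟨_, γ, by rw [← map_univ_snd, h2]; exact hν, h1, h2, rfl⟩

theorem cost_eq {X : Type} [MeasurableSpace X] {d : X → X → ℝ} (hd : GoodCost d)
    (γ : Measure (X × X)) [IsFiniteMeasure γ] :
    ∫ p, (1 - d p.1 p.2) ∂γ = (γ Set.univ).toReal - ∫ p, d p.1 p.2 ∂γ := by
  rw [integral_sub (integrable_const _) (hd.integrable γ)]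
  simp [Measure.real]

theorem uwAux_le {X : Type} [MeasurableSpace X] {d : X → X → ℝ} (hd : GoodCost d)
    {μ ν : Measure X} (hμ : μ Set.univ ≤ 1) (hν : ν Set.univ ≤ 1)
    (hm : ν Set.univ ≤ μ Set.univ)
    {γ : Measure (X × X)} (h1 : γ.map Prod.fst ≤ μ) (h2 : γ.map Prod.snd ≤ ν) :
    uwAux d μ ν ≤ (μ Set.univ).toReal - ∫ p, (1 - d p.1 p.2) ∂γ := by
  have : IsFiniteMeasure μ := ⟨hμ.trans_lt ENNReal.one_lt_top⟩
  have : IsFiniteMeasure ν := ⟨hν.trans_lt ENNReal.one_lt_top⟩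
  obtain ⟨γ', hle, h1', h2'⟩ := extend_coupling hm h1 h2
  have := finite_of_map_fst_le h1
  have := finite_of_map_fst_le h1'
  have hmass : γ' Set.univ = ν Set.univ := by rw [← map_univ_snd, h2']
  have : sInf {r : ℝ | ∃ γ : Measure (X × X), γ Set.univ ≤ 1 ∧
      γ.map Prod.fst ≤ μ ∧ γ.map Prod.snd = ν ∧ r = ∫ p, d p.1 p.2 ∂γ} ≤ ∫ p, d p.1 p.2 ∂γ' :=
    csInf_le (uwSet_bdd hd μ ν) ⟨γ', by rw [hmass]; exact hν, h1', h2', rfl⟩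
  have hmono : ∫ p, (1 - d p.1 p.2) ∂γ ≤ ∫ p, (1 - d p.1 p.2) ∂γ' :=
    integral_mono_measure hle (Filter.Eventually.of_forall fun p => by
      have := hd.le1 p.1 p.2; simp; linarith) ((integrable_const _).sub (hd.integrable γ'))
  rw [cost_eq hd γ', hmass] at hmono
  unfold uwAux
  linarith

theorem uwAux_ge {X : Type} [MeasurableSpace X] {d : X → X → ℝ} (hd : GoodCost d)
    {μ ν : Measure X} (hμ : μ Set.univ ≤ 1) (hν : ν Set.univ ≤ 1)
    (hm : ν Set.univ ≤ μ Set.univ) {δ : ℝ} (hδ : 0 < δ) :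
    ∃ γ : Measure (X × X), γ.map Prod.fst ≤ μ ∧ γ.map Prod.snd ≤ ν ∧
    (μ Set.univ).toReal - ∫ p, (1 - d p.1 p.2) ∂γ ≤ uwAux d μ ν + δ := by
  have : IsFiniteMeasure μ := ⟨hμ.trans_lt ENNReal.one_lt_top⟩
  obtain ⟨r, ⟨γ, -, h1, h2, rfl⟩, hr⟩ := exists_lt_of_csInf_lt (uwSet_nonempty d hμ hν hm)
    (lt_add_of_pos_right _ hδ)
  have := finite_of_map_fst_le h1
  have hmass : γ Set.univ = ν Set.univ := by rw [← map_univ_snd, h2]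
  refine ⟨γ, h1, h2.le, ?_⟩
  rw [cost_eq hd γ, hmass]
  unfold uwAux
  linarith

theorem swap_coupling {X : Type} [MeasurableSpace X] {d : X → X → ℝ} (hd : GoodCost d)
    {μ ν : Measure X} {γ : Measure (X × X)} (h1 : γ.map Prod.fst ≤ μ) (h2 : γ.map Prod.snd ≤ ν) :
    (γ.map Prod.swap).map Prod.fst ≤ ν ∧ (γ.map Prod.swap).map Prod.snd ≤ μ ∧
      ∫ p, (1 - d p.1 p.2) ∂(γ.map Prod.swap) = ∫ p, (1 - d p.1 p.2) ∂γ := by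
  refine ⟨?_, ?_, ?_⟩
  · rw [Measure.map_map measurable_fst measurable_swap]; exact h2
  · rw [Measure.map_map measurable_snd measurable_swap]; exact h1
  · have hm : Measurable (fun p : X × X => 1 - d p.1 p.2) := measurable_const.sub hd.meas
    rw [integral_map measurable_swap.aemeasurable hm.aestronglyMeasurable]
    refine integral_congr_ae (Filter.Eventually.of_forall fun p => ?_)
    simp [hd.symm p.2 p.1]

theorem uwDist_le {X : Type} [MeasurableSpace X] {d : X → X → ℝ} (hd : GoodCost d)
    {μ ν : Measure X} (hμ : μ Set.univ ≤ 1) (hν : ν Set.univ ≤ 1)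
    {γ : Measure (X × X)} (h1 : γ.map Prod.fst ≤ μ) (h2 : γ.map Prod.snd ≤ ν) :
    uwDist d μ ν ≤ max (μ Set.univ).toReal (ν Set.univ).toReal - ∫ p, (1 - d p.1 p.2) ∂γ := by
  unfold uwDist
  split_ifs with hm
  · refine (uwAux_le hd hμ hν hm h1 h2).trans ?_
    gcongr; exact le_max_left _ _
  · obtain ⟨a, b, e⟩ := swap_coupling hd h1 h2
    refine (uwAux_le hd hν hμ (le_of_not_ge hm) a b).trans ?_
    rw [e]
    gcongr; exact le_max_right _ _

theorem uwDist_ge {X : Type} [MeasurableSpace X] {d : X → X → ℝ} (hd : GoodCost d)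
    {μ ν : Measure X} (hμ : μ Set.univ ≤ 1) (hν : ν Set.univ ≤ 1) {δ : ℝ} (hδ : 0 < δ) :
    ∃ γ : Measure (X × X), γ.map Prod.fst ≤ μ ∧ γ.map Prod.snd ≤ ν ∧
    max (μ Set.univ).toReal (ν Set.univ).toReal - ∫ p, (1 - d p.1 p.2) ∂γ
      ≤ uwDist d μ ν + δ := by
  unfold uwDist
  have fμ : μ Set.univ ≠ ⊤ := (hμ.trans_lt ENNReal.one_lt_top).ne
  have fν : ν Set.univ ≠ ⊤ := (hν.trans_lt ENNReal.one_lt_top).ne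
  split_ifs with hm
  · obtain ⟨γ, a, b, e⟩ := uwAux_ge hd hμ hν hm hδ
    refine ⟨γ, a, b, ?_⟩
    rw [max_eq_left (ENNReal.toReal_mono fμ hm)]; exact e
  · obtain ⟨γ, a, b, e⟩ := uwAux_ge hd hν hμ (le_of_not_ge hm) hδ
    obtain ⟨a', b', e'⟩ := swap_coupling hd a b
    refine ⟨_, a', b', ?_⟩
    rw [e', max_eq_right (ENNReal.toReal_mono fν (le_of_not_ge hm))]; exact e

theorem uwDist_symm {X : Type} [MeasurableSpace X] {d : X → X → ℝ} (hd : GoodCost d)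
    {μ ν : Measure X} (hμ : μ Set.univ ≤ 1) (hν : ν Set.univ ≤ 1) :
    uwDist d μ ν = uwDist d ν μ := by
  have key : ∀ {μ ν : Measure X}, μ Set.univ ≤ 1 → ν Set.univ ≤ 1 →
      uwDist d μ ν ≤ uwDist d ν μ := by
    intro μ ν hμ hν
    refine le_of_forall_pos_le_add fun δ hδ => ?_
    obtain ⟨γ, a, b, e⟩ := uwDist_ge hd hν hμ hδ
    obtain ⟨a', b', e'⟩ := swap_coupling hd a b
    have := uwDist_le hd hμ hν a' b'
    rw [e', max_comm] at this
    exact this.trans e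
  exact le_antisymm (key hμ hν) (key hν hμ)

theorem uwAux_nonneg {X : Type} [MeasurableSpace X] {d : X → X → ℝ} (hd : GoodCost d)
    {μ ν : Measure X} (hμ : μ Set.univ ≤ 1)
    (hm : ν Set.univ ≤ μ Set.univ) : 0 ≤ uwAux d μ ν := by
  unfold uwAux
  have h1 : (ν Set.univ).toReal ≤ (μ Set.univ).toReal :=
    ENNReal.toReal_mono (hμ.trans_lt ENNReal.one_lt_top).ne hm
  have h2 : 0 ≤ sInf {r : ℝ | ∃ γ : Measure (X × X), γ Set.univ ≤ 1 ∧
      γ.map Prod.fst ≤ μ ∧ γ.map Prod.snd = ν ∧ r = ∫ p, d p.1 p.2 ∂γ} :=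
    Real.sInf_nonneg (by rintro r ⟨γ, -, -, -, rfl⟩; exact integral_nonneg fun p => hd.nn _ _)
  linarith

theorem uwDist_nonneg {X : Type} [MeasurableSpace X] {d : X → X → ℝ} (hd : GoodCost d)
    {μ ν : Measure X} (hμ : μ Set.univ ≤ 1) (hν : ν Set.univ ≤ 1) : 0 ≤ uwDist d μ ν := by
  unfold uwDist
  split_ifs with hm
  · exact uwAux_nonneg hd hμ hm
  · exact uwAux_nonneg hd hν (le_of_not_ge hm)

theorem uwDist_le_one {X : Type} [MeasurableSpace X] {d : X → X → ℝ} (hd : GoodCost d)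
    {μ ν : Measure X} (hμ : μ Set.univ ≤ 1) (hν : ν Set.univ ≤ 1) : uwDist d μ ν ≤ 1 := by
  have := uwDist_le hd hμ hν (γ := 0) (by simp [Measure.zero_le]) (by simp [Measure.zero_le])
  refine this.trans ?_
  simp only [integral_zero_measure, sub_zero]
  exact max_le (ENNReal.toReal_le_of_le_ofReal zero_le_one (by simpa using hμ))
    (ENNReal.toReal_le_of_le_ofReal zero_le_one (by simpa using hν))

/-- Lipschitz estimate for couplings. -/
theorem lip_coupling {X : Type} [MeasurableSpace X] {n : ℕ} {d : X → X → ℝ}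
    (f : X → EuclideanSpace ℝ (Fin n)) (hf : Measurable f) {B C : ℝ}
    (hB : ∀ x, ‖f x‖ ≤ B) (hC : ∀ x y, ‖f x - f y‖ ≤ C * d x y)
    (γ : Measure (X × X)) [IsFiniteMeasure γ] (hi : Integrable (fun p : X × X => d p.1 p.2) γ) :
    ‖∫ x, f x ∂(γ.map Prod.fst) - ∫ x, f x ∂(γ.map Prod.snd)‖ ≤ C * ∫ p, d p.1 p.2 ∂γ := by
  rw [integral_map measurable_fst.aemeasurable hf.aestronglyMeasurable,
    integral_map measurable_snd.aemeasurable hf.aestronglyMeasurable]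
  have i1 : Integrable (fun p : X × X => f p.1) γ :=
    Integrable.of_bound (hf.comp measurable_fst).aestronglyMeasurable B
      (Filter.Eventually.of_forall fun p => hB _)
  have i2 : Integrable (fun p : X × X => f p.2) γ :=
    Integrable.of_bound (hf.comp measurable_snd).aestronglyMeasurable B
      (Filter.Eventually.of_forall fun p => hB _)
  rw [← integral_sub i1 i2, ← integral_const_mul]
  exact norm_integral_le_of_norm_le (hi.const_mul C) (Filter.Eventually.of_forall fun p => hC _ _)

theorem lip_uwAux {X : Type} [MeasurableSpace X] {n : ℕ} {d : X → X → ℝ} (hd : GoodCost d)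
    (f : X → EuclideanSpace ℝ (Fin n)) (hf : Measurable f) {B C : ℝ} (hB0 : 0 ≤ B) (hC0 : 0 ≤ C)
    (hB : ∀ x, ‖f x‖ ≤ B) (hC : ∀ x y, ‖f x - f y‖ ≤ C * d x y)
    {μ ν : Measure X} (hμ : μ Set.univ ≤ 1) (hν : ν Set.univ ≤ 1)
    (hm : ν Set.univ ≤ μ Set.univ) :
    ‖∫ x, f x ∂μ - ∫ x, f x ∂ν‖ ≤ (B + C) * uwAux d μ ν := by
  have : IsFiniteMeasure μ := ⟨hμ.trans_lt ENNReal.one_lt_top⟩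
  have : IsFiniteMeasure ν := ⟨hν.trans_lt ENNReal.one_lt_top⟩
  have int : ∀ (ρ : Measure X) [IsFiniteMeasure ρ], Integrable f ρ := fun ρ _ =>
    Integrable.of_bound hf.aestronglyMeasurable B (Filter.Eventually.of_forall hB)
  have hmr : (ν Set.univ).toReal ≤ (μ Set.univ).toReal :=
    ENNReal.toReal_mono (measure_ne_top _ _) hm
  have key : ∀ r ∈ {r : ℝ | ∃ γ : Measure (X × X), γ Set.univ ≤ 1 ∧
      γ.map Prod.fst ≤ μ ∧ γ.map Prod.snd = ν ∧ r = ∫ p, d p.1 p.2 ∂γ},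
      ‖∫ x, f x ∂μ - ∫ x, f x ∂ν‖ ≤ (B + C) * ((μ Set.univ).toReal - (ν Set.univ).toReal + r) := by
    rintro r ⟨γ, -, h1, h2, rfl⟩
    have := finite_of_map_fst_le h1
    have hl := lip_coupling f hf hB hC γ (hd.integrable γ)
    rw [h2] at hl
    have e : μ - γ.map Prod.fst + γ.map Prod.fst = μ := Measure.sub_add_cancel_of_le h1
    set ρ := μ - γ.map Prod.fst with hρ
    have : IsFiniteMeasure ρ := ⟨by
      have : ρ Set.univ ≤ μ Set.univ := by rw [← e]; simp
      exact this.trans_lt (measure_lt_top _ _)⟩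
    have hmass : γ Set.univ = ν Set.univ := by rw [← map_univ_snd, h2]
    have mρ : (ρ Set.univ).toReal = (μ Set.univ).toReal - (ν Set.univ).toReal := by
      rw [← e, Measure.add_apply, map_univ_fst, hmass,
        ENNReal.toReal_add (measure_ne_top _ _) (measure_ne_top _ _)]
      ring
    have e3 : ∫ x, f x ∂μ = ∫ x, f x ∂ρ + ∫ x, f x ∂(γ.map Prod.fst) := by
      rw [← integral_add_measure (int _) (int _), e]
    have e4 : ‖∫ x, f x ∂ρ‖ ≤ B * ((μ Set.univ).toReal - (ν Set.univ).toReal) := by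
      rw [← mρ]
      exact norm_integral_le_of_norm_le_const (Filter.Eventually.of_forall hB)
    have hr : 0 ≤ ∫ p, d p.1 p.2 ∂γ := integral_nonneg fun p => hd.nn _ _
    calc ‖∫ x, f x ∂μ - ∫ x, f x ∂ν‖
        = ‖∫ x, f x ∂ρ + (∫ x, f x ∂(γ.map Prod.fst) - ∫ x, f x ∂ν)‖ := by
          rw [e3, add_sub_assoc]
      _ ≤ B * ((μ Set.univ).toReal - (ν Set.univ).toReal) + C * ∫ p, d p.1 p.2 ∂γ :=
          (norm_add_le _ _).trans (add_le_add e4 hl)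
      _ ≤ _ := by nlinarith [mul_nonneg hB0 hr, mul_nonneg hC0 (sub_nonneg.2 hmr)]
  unfold uwAux
  obtain ⟨r0, hr0⟩ := uwSet_nonempty d hμ hν hm
  rcases (add_nonneg hB0 hC0).eq_or_lt with h0 | h0
  · rw [← h0, zero_mul]; have := key r0 hr0; rwa [← h0, zero_mul] at this
  · rw [mul_comm, ← div_le_iff₀ h0, ← sub_le_iff_le_add']
    refine le_csInf ⟨r0, hr0⟩ fun r hr => ?_
    rw [sub_le_iff_le_add', div_le_iff₀ h0, mul_comm]
    exact key r hr

theorem lip_uwDist {X : Type} [MeasurableSpace X] {n : ℕ} {d : X → X → ℝ} (hd : GoodCost d)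
    (f : X → EuclideanSpace ℝ (Fin n)) (hf : Measurable f) {B C : ℝ} (hB0 : 0 ≤ B) (hC0 : 0 ≤ C)
    (hB : ∀ x, ‖f x‖ ≤ B) (hC : ∀ x y, ‖f x - f y‖ ≤ C * d x y)
    {μ ν : Measure X} (hμ : μ Set.univ ≤ 1) (hν : ν Set.univ ≤ 1) :
    ‖∫ x, f x ∂μ - ∫ x, f x ∂ν‖ ≤ (B + C) * uwDist d μ ν := by
  unfold uwDist
  split_ifs with hm
  · exact lip_uwAux hd f hf hB0 hC0 hB hC hμ hν hm
  · rw [norm_sub_rev]; exact lip_uwAux hd f hf hB0 hC0 hB hC hν hμ (le_of_not_ge hm)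

theorem lip_wass {X : Type} [MeasurableSpace X] {n : ℕ} {d : X → X → ℝ}
    (f : X → EuclideanSpace ℝ (Fin n)) (hf : Measurable f) {B C : ℝ} (hC0 : 0 ≤ C)
    (hd : ∀ (γ : Measure (X × X)) [IsFiniteMeasure γ], Integrable (fun p : X × X => d p.1 p.2) γ)
    (hB : ∀ x, ‖f x‖ ≤ B) (hC : ∀ x y, ‖f x - f y‖ ≤ C * d x y)
    {μ ν : Measure X} [IsProbabilityMeasure μ] [IsProbabilityMeasure ν] :
    ‖∫ x, f x ∂μ - ∫ x, f x ∂ν‖ ≤ C * wassersteinDist d μ ν := by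
  have key : ∀ r ∈ {r : ℝ | ∃ γ : Measure (X × X),
    γ.map Prod.fst = μ ∧ γ.map Prod.snd = ν ∧ r = ∫ p, d p.1 p.2 ∂γ},
      ‖∫ x, f x ∂μ - ∫ x, f x ∂ν‖ ≤ C * r := by
    rintro r ⟨γ, h1, h2, rfl⟩
    have := finite_of_map_fst_le h1.le
    have hl := lip_coupling f hf hB hC γ (hd γ)
    rwa [h1, h2] at hl
  unfold wassersteinDist
  have hne : (∫ p, d p.1 p.2 ∂(μ.prod ν)) ∈ {r : ℝ | ∃ γ : Measure (X × X),
    γ.map Prod.fst = μ ∧ γ.map Prod.snd = ν ∧ r = ∫ p, d p.1 p.2 ∂γ} :=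
    ⟨μ.prod ν, by simp, by simp, rfl⟩
  rcases hC0.eq_or_lt with h0 | h0
  · rw [← h0, zero_mul]; have := key _ hne; rwa [← h0, zero_mul] at this
  · rw [mul_comm, ← div_le_iff₀ h0]
    refine le_csInf ⟨_, hne⟩ fun r hr => ?_
    rw [div_le_iff₀ h0, mul_comm]
    exact key r hr

theorem wass_nonneg {X : Type} [MeasurableSpace X] {d : X → X → ℝ} (h : ∀ x y, 0 ≤ d x y)
    (μ ν : Measure X) : 0 ≤ wassersteinDist d μ ν :=
  Real.sInf_nonneg (by rintro r ⟨γ, -, -, rfl⟩; exact integral_nonneg fun p => h _ _)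

theorem exists_ratio {a a' η : ℝ} (_ha : 0 ≤ a) (ha' : 0 ≤ a') (hη : 0 ≤ η) (h : a ≤ a' + η) :
    ∃ r : ℝ, 0 ≤ r ∧ r ≤ 1 ∧ r * a ≤ a' ∧ a * (1 - r) ≤ η := by
  by_cases hle : a ≤ a'
  · exact ⟨1, by norm_num, le_rfl, by linarith, by simpa using hη⟩
  · push Not at hle
    have hpos : 0 < a := ha'.trans_lt hle
    refine ⟨a' / a, by positivity, (div_le_one hpos).2 hle.le, ?_, ?_⟩
    · rw [div_mul_cancel₀ _ hpos.ne']
    · have : a * (1 - a' / a) = a - a' := by field_simp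
      linarith

theorem integral_cells {X ι : Type} [MeasurableSpace X] [Fintype ι] [MeasurableSpace ι]
    [DiscreteMeasurableSpace ι]
    (p : X → ι) (hp : Measurable p) (F : ι → ι → ℝ) (γ : Measure (X × X)) [IsFiniteMeasure γ] :
    ∫ z, F (p z.1) (p z.2) ∂γ = ∑ i, ∑ j, γ.real ((p ⁻¹' {i}) ×ˢ (p ⁻¹' {j})) * F i j := by
  have hq : Measurable (Prod.map p p) := hp.prodMap hp
  have hF : AEStronglyMeasurable (fun q : ι × ι => F q.1 q.2) (γ.map (Prod.map p p)) :=
    (measurable_of_countable _).aestronglyMeasurable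
  have := integral_map hq.aemeasurable hF
  simp only [Prod.map_fst, Prod.map_snd] at this
  rw [← this, integral_fintype (Integrable.of_finite), Fintype.sum_prod_type]
  refine Finset.sum_congr rfl fun i _ => Finset.sum_congr rfl fun j _ => ?_
  rw [smul_eq_mul, map_measureReal_apply hq (measurableSet_singleton _)]
  congr 2
  ext z; simp [Prod.ext_iff]

theorem cell_sum_fst {X ι : Type} [MeasurableSpace X] [Fintype ι] [MeasurableSpace ι]
    [DiscreteMeasurableSpace ι]
    (p : X → ι) (hp : Measurable p) (γ : Measure (X × X)) [IsFiniteMeasure γ] (i : ι) :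
    ∑ j, γ.real ((p ⁻¹' {i}) ×ˢ (p ⁻¹' {j})) = (γ.map Prod.fst).real (p ⁻¹' {i}) := by
  have hi : MeasurableSet (p ⁻¹' {i}) := hp (measurableSet_singleton _)
  have hj : ∀ j, MeasurableSet ((fun z : X × X => p z.2) ⁻¹' {j}) := fun j =>
    (hp.comp measurable_snd) (measurableSet_singleton _)
  have := sum_measureReal_preimage_singleton (μ := γ.restrict (Prod.fst ⁻¹' (p ⁻¹' {i})))
    Finset.univ (f := fun z : X × X => p z.2) (fun j _ => hj j)
  rw [map_measureReal_apply measurable_fst hi]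
  simp only [Finset.coe_univ, Set.preimage_univ, measureReal_restrict_apply_univ] at this
  rw [← this]
  refine Finset.sum_congr rfl fun j _ => ?_
  rw [measureReal_restrict_apply (hj j)]
  congr 1
  ext z; simp [and_comm]

theorem cell_sum_snd {X ι : Type} [MeasurableSpace X] [Fintype ι] [MeasurableSpace ι]
    [DiscreteMeasurableSpace ι]
    (p : X → ι) (hp : Measurable p) (γ : Measure (X × X)) [IsFiniteMeasure γ] (j : ι) :
    ∑ i, γ.real ((p ⁻¹' {i}) ×ˢ (p ⁻¹' {j})) = (γ.map Prod.snd).real (p ⁻¹' {j}) := by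
  have hi : MeasurableSet (p ⁻¹' {j}) := hp (measurableSet_singleton _)
  have hj : ∀ j, MeasurableSet ((fun z : X × X => p z.1) ⁻¹' {j}) := fun j =>
    (hp.comp measurable_fst) (measurableSet_singleton _)
  have := sum_measureReal_preimage_singleton (μ := γ.restrict (Prod.snd ⁻¹' (p ⁻¹' {j})))
    Finset.univ (f := fun z : X × X => p z.1) (fun j _ => hj j)
  rw [map_measureReal_apply measurable_snd hi]
  simp only [Finset.coe_univ, Set.preimage_univ, measureReal_restrict_apply_univ] at this
  rw [← this]
  refine Finset.sum_congr rfl fun j _ => ?_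
  rw [measureReal_restrict_apply (hj j)]
  congr 1

/-- Realize a finite matrix as a measure on the product. -/
theorem realize {X ι : Type} [MeasurableSpace X] [Fintype ι] [MeasurableSpace ι]
    [DiscreteMeasurableSpace ι]
    (p : X → ι) (hp : Measurable p) (μ ν : Measure X) [IsFiniteMeasure μ] [IsFiniteMeasure ν]
    (w : ι → ι → ℝ) (hw : ∀ i j, 0 ≤ w i j)
    (h1 : ∀ i, ∑ j, w i j ≤ μ.real (p ⁻¹' {i})) (h2 : ∀ j, ∑ i, w i j ≤ ν.real (p ⁻¹' {j})) :
    ∃ γ : Measure (X × X), γ.map Prod.fst ≤ μ ∧ γ.map Prod.snd ≤ ν ∧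
      ∀ i j, γ.real ((p ⁻¹' {i}) ×ˢ (p ⁻¹' {j})) = w i j := by
  set a : ι → ℝ := fun i => μ.real (p ⁻¹' {i}) with ha
  set b : ι → ℝ := fun j => ν.real (p ⁻¹' {j}) with hb
  have a0 : ∀ i, 0 ≤ a i := fun i => measureReal_nonneg
  have b0 : ∀ i, 0 ≤ b i := fun i => measureReal_nonneg
  have wa : ∀ i j, w i j ≤ a i := fun i j =>
    (Finset.single_le_sum (fun k _ => hw i k) (Finset.mem_univ j)).trans (h1 i)
  have wb : ∀ i j, w i j ≤ b j := fun i j =>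
    (Finset.single_le_sum (f := fun k => w k j) (fun k _ => hw k j) (Finset.mem_univ i)).trans (h2 j)
  set c : ι → ι → ℝ := fun i j => w i j / (a i * b j) with hc
  have c0 : ∀ i j, 0 ≤ c i j := fun i j => div_nonneg (hw i j) (mul_nonneg (a0 i) (b0 j))
  have cab : ∀ i j, c i j * (a i * b j) = w i j := by
    intro i j
    by_cases h : a i * b j = 0
    · rw [h, mul_zero]
      rcases mul_eq_zero.1 h with h | h
      · exact le_antisymm (hw i j) (h ▸ wa i j)
      · exact le_antisymm (hw i j) (h ▸ wb i j)
    · exact div_mul_cancel₀ _ h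
  have μA : ∀ i, μ (p ⁻¹' {i}) = ENNReal.ofReal (a i) := fun i => by simp [ha]
  have νA : ∀ i, ν (p ⁻¹' {i}) = ENNReal.ofReal (b i) := fun i => by simp [hb]
  have row : ∀ i, ∑ j, c i j * b j ≤ 1 := by
    intro i
    by_cases h : a i = 0
    · simp [hc, h]
    · have hpos : 0 < a i := lt_of_le_of_ne (a0 i) (Ne.symm h)
      refine le_of_mul_le_mul_left ?_ hpos
      rw [Finset.mul_sum, mul_one]
      refine le_trans (le_of_eq ?_) (h1 i)
      exact Finset.sum_congr rfl fun j _ => by rw [← cab i j]; ring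
  have col : ∀ j, ∑ i, c i j * a i ≤ 1 := by
    intro j
    by_cases h : b j = 0
    · simp [hc, h]
    · have hpos : 0 < b j := lt_of_le_of_ne (b0 j) (Ne.symm h)
      refine le_of_mul_le_mul_left ?_ hpos
      rw [Finset.mul_sum, mul_one]
      refine le_trans (le_of_eq ?_) (h2 j)
      exact Finset.sum_congr rfl fun i _ => by rw [← cab i j]; ring
  set ρ : X × X → ENNReal := fun z => ENNReal.ofReal (c (p z.1) (p z.2)) with hρ
  have ρm : Measurable ρ := by
    have : Measurable (fun q : ι × ι => ENNReal.ofReal (c q.1 q.2)) := measurable_of_countable _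
    exact this.comp (hp.prodMap hp)
  have lin : ∀ (g : ι → ℝ) (hg : ∀ i, 0 ≤ g i) (κ : Measure X) (e : ι → ℝ)
      (he : ∀ i, κ (p ⁻¹' {i}) = ENNReal.ofReal (e i)) (he0 : ∀ i, 0 ≤ e i),
      ∫⁻ y, ENNReal.ofReal (g (p y)) ∂κ = ENNReal.ofReal (∑ j, g j * e j) := by
    intro g hg κ e he he0
    have := lintegral_map (μ := κ) (f := fun i => ENNReal.ofReal (g i))
      (measurable_of_countable _) hp
    rw [← this, lintegral_fintype, ENNReal.ofReal_sum_of_nonneg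
      (fun j _ => mul_nonneg (hg j) (he0 j))]
    refine Finset.sum_congr rfl fun j _ => ?_
    rw [Measure.map_apply hp (measurableSet_singleton _), he, ENNReal.ofReal_mul (hg j)]
  refine ⟨(μ.prod ν).withDensity ρ, ?_, ?_, ?_⟩
  · refine Measure.le_iff.2 fun s hs => ?_
    rw [Measure.map_apply measurable_fst hs, withDensity_apply _ (measurable_fst hs),
      ← Set.prod_univ, ← Measure.prod_restrict, lintegral_prod _ ρm.aemeasurable]
    calc _ ≤ ∫⁻ x in s, 1 ∂μ := by
          refine lintegral_mono fun x => ?_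
          simp only [hρ, Measure.restrict_univ]
          rw [lin (c (p x)) (c0 _) ν b νA b0]
          exact ENNReal.ofReal_le_one.2 (row _)
      _ = μ s := by simp
  · refine Measure.le_iff.2 fun s hs => ?_
    rw [Measure.map_apply measurable_snd hs, withDensity_apply _ (measurable_snd hs),
      ← Set.univ_prod, ← Measure.prod_restrict, lintegral_prod_symm _ ρm.aemeasurable]
    calc _ ≤ ∫⁻ x in s, 1 ∂ν := by
          refine lintegral_mono fun x => ?_
          simp only [hρ, Measure.restrict_univ]
          rw [lin (fun i => c i (p x)) (fun i => c0 _ _) μ a μA a0]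
          exact ENNReal.ofReal_le_one.2 (col _)
      _ = ν s := by simp
  · intro i j
    have hi : MeasurableSet (p ⁻¹' {i}) := hp (measurableSet_singleton _)
    have hj : MeasurableSet (p ⁻¹' {j}) := hp (measurableSet_singleton _)
    rw [Measure.real, withDensity_apply _ (hi.prod hj)]
    have : ∫⁻ z in (p ⁻¹' {i}) ×ˢ (p ⁻¹' {j}), ρ z ∂(μ.prod ν)
        = ∫⁻ z in (p ⁻¹' {i}) ×ˢ (p ⁻¹' {j}), ENNReal.ofReal (c i j) ∂(μ.prod ν) := by
      refine setLIntegral_congr_fun (hi.prod hj) fun z hz => ?_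
      obtain ⟨h1, h2⟩ := hz
      simp only [Set.mem_preimage, Set.mem_singleton_iff] at h1 h2
      simp only [hρ, h1, h2]
    rw [this, setLIntegral_const, Measure.prod_prod, μA, νA, ← ENNReal.ofReal_mul (a0 i),
      ← ENNReal.ofReal_mul (c0 i j), cab, ENNReal.toReal_ofReal (hw i j)]

theorem transfer {X ι : Type} [MeasurableSpace X] [Fintype ι] [MeasurableSpace ι]
    [DiscreteMeasurableSpace ι] {d : X → X → ℝ} (hd : GoodCost d)
    (p : X → ι) (hp : Measurable p) (D : ι → ι → ℝ) (hD : ∀ i j, 0 ≤ D i j) {ε η : ℝ}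
    (hε : 0 ≤ ε) (hη : 0 ≤ η)
    (hdD : ∀ x y, |d x y - D (p x) (p y)| ≤ ε)
    {μ ν μ' ν' : Measure X} (hμ : μ Set.univ ≤ 1)
    (hμ' : μ' Set.univ ≤ 1) (hν : ν Set.univ ≤ 1) (hν' : ν' Set.univ ≤ 1)
    (h1 : ∀ i, μ.real (p ⁻¹' {i}) ≤ μ'.real (p ⁻¹' {i}) + η)
    (h2 : ∀ i, ν.real (p ⁻¹' {i}) ≤ ν'.real (p ⁻¹' {i}) + η)
    {γ : Measure (X × X)} (g1 : γ.map Prod.fst ≤ μ) (g2 : γ.map Prod.snd ≤ ν) :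
    ∃ γ' : Measure (X × X), γ'.map Prod.fst ≤ μ' ∧ γ'.map Prod.snd ≤ ν' ∧
      ∫ z, (1 - d z.1 z.2) ∂γ ≤ ∫ z, (1 - d z.1 z.2) ∂γ' + 2 * ε + 2 * Fintype.card ι * η := by
  have : IsFiniteMeasure μ := ⟨hμ.trans_lt ENNReal.one_lt_top⟩
  have : IsFiniteMeasure μ' := ⟨hμ'.trans_lt ENNReal.one_lt_top⟩
  have : IsFiniteMeasure ν := ⟨hν.trans_lt ENNReal.one_lt_top⟩
  have : IsFiniteMeasure ν' := ⟨hν'.trans_lt ENNReal.one_lt_top⟩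
  have := finite_of_map_fst_le g1
  choose r r0 r1 ra rη using fun i => exists_ratio (measureReal_nonneg (μ := μ)
    (s := p ⁻¹' {i})) (measureReal_nonneg (μ := μ') (s := p ⁻¹' {i})) hη (h1 i)
  choose s s0 s1 sa sη using fun i => exists_ratio (measureReal_nonneg (μ := ν)
    (s := p ⁻¹' {i})) (measureReal_nonneg (μ := ν') (s := p ⁻¹' {i})) hη (h2 i)
  set g : ι → ι → ℝ := fun i j => γ.real ((p ⁻¹' {i}) ×ˢ (p ⁻¹' {j})) with hg
  have g0 : ∀ i j, 0 ≤ g i j := fun i j => measureReal_nonneg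
  have grow : ∀ i, ∑ j, g i j ≤ μ.real (p ⁻¹' {i}) := fun i => by
    simp only [hg]
    rw [cell_sum_fst p hp γ i]
    exact ENNReal.toReal_mono (measure_ne_top _ _) (g1 _)
  have gcol : ∀ j, ∑ i, g i j ≤ ν.real (p ⁻¹' {j}) := fun j => by
    simp only [hg]
    rw [cell_sum_snd p hp γ j]
    exact ENNReal.toReal_mono (measure_ne_top _ _) (g2 _)
  obtain ⟨γ', k1, k2, k3⟩ := realize p hp μ' ν' (fun i j => r i * s j * g i j)
    (fun i j => mul_nonneg (mul_nonneg (r0 i) (s0 j)) (g0 i j))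
    (fun i => by
      calc ∑ j, r i * s j * g i j ≤ ∑ j, r i * g i j := by
            refine Finset.sum_le_sum fun j _ => ?_
            have := mul_le_mul_of_nonneg_left (s1 j) (mul_nonneg (r0 i) (g0 i j))
            nlinarith
        _ = r i * ∑ j, g i j := by rw [Finset.mul_sum]
        _ ≤ r i * μ.real (p ⁻¹' {i}) := mul_le_mul_of_nonneg_left (grow i) (r0 i)
        _ ≤ _ := ra i)
    (fun j => by
      calc ∑ i, r i * s j * g i j ≤ ∑ i, s j * g i j := by
            refine Finset.sum_le_sum fun i _ => ?_
            have := mul_le_mul_of_nonneg_left (r1 i) (mul_nonneg (s0 j) (g0 i j))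
            nlinarith
        _ = s j * ∑ i, g i j := by rw [Finset.mul_sum]
        _ ≤ s j * ν.real (p ⁻¹' {j}) := mul_le_mul_of_nonneg_left (gcol j) (s0 j)
        _ ≤ _ := sa j)
  have := finite_of_map_fst_le k1
  refine ⟨γ', k1, k2, ?_⟩
  have mass : ∀ (γ : Measure (X × X)) [IsFiniteMeasure γ] (μ : Measure X), μ Set.univ ≤ 1 →
      γ.map Prod.fst ≤ μ → γ.real Set.univ ≤ 1 := by
    intro γ _ μ hμ h
    have : γ Set.univ ≤ 1 := by rw [← map_univ_fst]; exact (h _).trans hμ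
    exact ENNReal.toReal_le_of_le_ofReal zero_le_one (by simpa using this)
  have cm : ∀ (γ : Measure (X × X)) [IsFiniteMeasure γ] (μ : Measure X), μ Set.univ ≤ 1 →
      γ.map Prod.fst ≤ μ →
      |∫ z, (1 - d z.1 z.2) ∂γ - ∫ z, (1 - D (p z.1) (p z.2)) ∂γ| ≤ ε := by
    intro γ _ μ hμ h
    have iD : Integrable (fun z : X × X => 1 - D (p z.1) (p z.2)) γ := by
      have h1 : Measurable (fun q : ι × ι => 1 - D q.1 q.2) := measurable_of_countable _
      have h2 : Integrable (fun q : ι × ι => 1 - D q.1 q.2) (γ.map (Prod.map p p)) :=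
        Integrable.of_finite
      exact h2.comp_measurable (hp.prodMap hp)
    have id' : Integrable (fun z : X × X => 1 - d z.1 z.2) γ :=
      (integrable_const _).sub (hd.integrable γ)
    rw [← integral_sub id' iD, ← Real.norm_eq_abs]
    refine (norm_integral_le_of_norm_le_const (C := ε)
      (Filter.Eventually.of_forall fun z => ?_)).trans ?_
    · have := hdD z.1 z.2
      rw [Real.norm_eq_abs, show (1 - d z.1 z.2 - (1 - D (p z.1) (p z.2)))
        = -(d z.1 z.2 - D (p z.1) (p z.2)) by ring, abs_neg]
      exact this
    · exact mul_le_of_le_one_right hε (mass γ μ hμ h)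
  have c1 := abs_le.1 (cm γ μ hμ g1)
  have c2 := abs_le.1 (cm γ' μ' hμ' k1)
  have e1 := integral_cells p hp (fun i j => 1 - D i j) γ
  have e2 := integral_cells p hp (fun i j => 1 - D i j) γ'
  have main : ∫ z, (1 - D (p z.1) (p z.2)) ∂γ - ∫ z, (1 - D (p z.1) (p z.2)) ∂γ'
      ≤ 2 * Fintype.card ι * η := by
    rw [e1, e2, ← Finset.sum_sub_distrib]
    simp only [k3, ← Finset.sum_sub_distrib]
    calc _ ≤ ∑ i, ∑ j, (g i j * (1 - r i) + g i j * (1 - s j)) := by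
          refine Finset.sum_le_sum fun i _ => Finset.sum_le_sum fun j _ => ?_
          have e : γ.real ((p ⁻¹' {i}) ×ˢ (p ⁻¹' {j})) * (1 - D i j)
            - r i * s j * g i j * (1 - D i j) = g i j * ((1 - r i * s j) * (1 - D i j)) := by
            simp only [hg]; ring
          rw [e, ← mul_add]
          refine mul_le_mul_of_nonneg_left ?_ (g0 i j)
          have q1 : r i * s j ≤ 1 := mul_le_one₀ (r1 i) (s0 j) (s1 j)
          have q2 : 0 ≤ (1 - r i * s j) * D i j := mul_nonneg (by linarith) (hD i j)
          nlinarith [mul_nonneg (sub_nonneg.2 (r1 i)) (sub_nonneg.2 (s1 j))]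
      _ = ∑ i, (∑ j, g i j) * (1 - r i) + ∑ j, (∑ i, g i j) * (1 - s j) := by
          simp only [Finset.sum_add_distrib, Finset.sum_mul]
          congr 1
          exact Finset.sum_comm
      _ ≤ ∑ i : ι, η + ∑ j : ι, η := by
          refine add_le_add (Finset.sum_le_sum fun i _ => ?_) (Finset.sum_le_sum fun j _ => ?_)
          · exact (mul_le_mul_of_nonneg_right (grow i) (sub_nonneg.2 (r1 i))).trans (rη i)
          · exact (mul_le_mul_of_nonneg_right (gcol j) (sub_nonneg.2 (s1 j))).trans (sη j)
      _ = _ := by simp; ring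
  linarith [c1.1, c1.2, c2.1, c2.2]

theorem uwDist_stable {X ι : Type} [MeasurableSpace X] [Fintype ι] [MeasurableSpace ι]
    [DiscreteMeasurableSpace ι] {d : X → X → ℝ} (hd : GoodCost d)
    (p : X → ι) (hp : Measurable p) (D : ι → ι → ℝ) (hD : ∀ i j, 0 ≤ D i j) {ε η : ℝ}
    (hε : 0 ≤ ε) (hη : 0 ≤ η)
    (hdD : ∀ x y, |d x y - D (p x) (p y)| ≤ ε)
    {μ ν μ' ν' : Measure X} (hμ : μ Set.univ ≤ 1)
    (hμ' : μ' Set.univ ≤ 1) (hν : ν Set.univ ≤ 1) (hν' : ν' Set.univ ≤ 1)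
    (h1 : ∀ i, |μ.real (p ⁻¹' {i}) - μ'.real (p ⁻¹' {i})| ≤ η)
    (h2 : ∀ i, |ν.real (p ⁻¹' {i}) - ν'.real (p ⁻¹' {i})| ≤ η) :
    uwDist d μ' ν' ≤ uwDist d μ ν + (2 * ε + 3 * Fintype.card ι * η) := by
  have : IsFiniteMeasure μ := ⟨hμ.trans_lt ENNReal.one_lt_top⟩
  have : IsFiniteMeasure μ' := ⟨hμ'.trans_lt ENNReal.one_lt_top⟩
  have : IsFiniteMeasure ν := ⟨hν.trans_lt ENNReal.one_lt_top⟩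
  have : IsFiniteMeasure ν' := ⟨hν'.trans_lt ENNReal.one_lt_top⟩
  refine le_of_forall_pos_le_add fun δ hδ => ?_
  obtain ⟨γ, a, b, e⟩ := uwDist_ge hd hμ hν hδ
  obtain ⟨γ', a', b', e'⟩ := transfer hd p hp D hD hε hη hdD hμ hμ' hν hν'
    (fun i => by linarith [(abs_le.1 (h1 i)).2]) (fun i => by linarith [(abs_le.1 (h2 i)).2]) a b
  have u := uwDist_le hd hμ' hν' a' b'
  have tot : ∀ (μ μ' : Measure X) [IsFiniteMeasure μ] [IsFiniteMeasure μ'],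
      (∀ i, |μ.real (p ⁻¹' {i}) - μ'.real (p ⁻¹' {i})| ≤ η) →
      (μ' Set.univ).toReal ≤ (μ Set.univ).toReal + Fintype.card ι * η := by
    intro μ μ' _ _ h
    have s : ∀ (μ : Measure X) [IsFiniteMeasure μ],
        (μ Set.univ).toReal = ∑ i, μ.real (p ⁻¹' {i}) := by
      intro μ _
      have := sum_measureReal_preimage_singleton (μ := μ) Finset.univ (f := p)
        (fun j _ => hp (measurableSet_singleton _))
      rw [this]; simp [Measure.real]
    rw [s μ, s μ']
    calc _ ≤ ∑ i, (μ.real (p ⁻¹' {i}) + η) :=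
          Finset.sum_le_sum fun i _ => by linarith [(abs_le.1 (h i)).1]
      _ = _ := by simp [Finset.sum_add_distrib]
  have m : max (μ' Set.univ).toReal (ν' Set.univ).toReal ≤
      max (μ Set.univ).toReal (ν Set.univ).toReal + Fintype.card ι * η :=
    max_le ((tot μ μ' h1).trans (by gcongr; exact le_max_left _ _))
      ((tot ν ν' h2).trans (by gcongr; exact le_max_right _ _))
  linarith

/-- The Baire sigma-algebra, generated by zero sets of continuous functions. -/
@[reducible] def baire (X : Type) [TopologicalSpace X] : MeasurableSpace X :=
  MeasurableSpace.generateFrom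
    {s | ∃ f : X → ℝ, Continuous f ∧ (∀ x, 0 ≤ f x) ∧ s = f ⁻¹' {0}}

theorem baire_le {X : Type} [TopologicalSpace X] [m : MeasurableSpace X] [BorelSpace X] :
    baire X ≤ m := by
  refine MeasurableSpace.generateFrom_le ?_
  rintro s ⟨f, hf, -, rfl⟩
  exact (isClosed_singleton.preimage hf).measurableSet

theorem measurable_baire {X : Type} [TopologicalSpace X] {g : X → ℝ} (hg : Continuous g) :
    Measurable[baire X] g := by
  let mX : MeasurableSpace X := baire X
  refine measurable_of_Iic fun a => ?_
  refine MeasurableSpace.measurableSet_generateFrom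
    ⟨fun x => max (g x - a) 0, by fun_prop, fun x => le_max_right _ _, ?_⟩
  ext x
  simp

theorem baire_eval {X : Type} [TopologicalSpace X] [MeasurableSpace X] [BorelSpace X]
    (A : Set X) (hA : MeasurableSet[baire X] A) :
    @Measurable (SubProb X) ENNReal (@baire (SubProb X) (subProbWeakTop X)) _
      (fun μ => μ.1 A) := by
  let tS : TopologicalSpace (SubProb X) := subProbWeakTop X
  let mS : MeasurableSpace (SubProb X) := baire (SubProb X)
  have fin : ∀ μ : SubProb X, IsFiniteMeasure μ.1 := fun μ => ⟨μ.2.trans_lt ENNReal.one_lt_top⟩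
  have base : ∀ f : X → ℝ, Continuous f → (∀ x, 0 ≤ f x) →
      Measurable (fun μ : SubProb X => μ.1 (f ⁻¹' {0})) := by
    intro f hf f0
    have hZ : MeasurableSet (f ⁻¹' {0}) := (isClosed_singleton.preimage hf).measurableSet
    let G : ℕ → BoundedContinuousFunction X ℝ := fun n =>
      BoundedContinuousFunction.ofNormedAddCommGroup (fun x => max 0 (1 - n * f x)) (by fun_prop) 1
        (fun x => by
          rw [Real.norm_eq_abs, abs_of_nonneg (le_max_left _ _)]
          refine max_le zero_le_one ?_
          have := mul_nonneg (Nat.cast_nonneg (α := ℝ) n) (f0 x)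
          linarith)
    have hG : ∀ n x, G n x = max 0 (1 - n * f x) := fun n x => rfl
    have hGc : ∀ n, Measurable (fun μ : SubProb X => ∫ x, G n x ∂μ.1) := fun n =>
      measurable_baire (continuous_iff_le_induced.2 (iInf_le _ (G n)))
    have lim : Measurable (fun μ : SubProb X => μ.1.real (f ⁻¹' {0})) := by
      refine measurable_of_tendsto_metrizable hGc ?_
      rw [tendsto_pi_nhds]
      intro μ
      have := fin μ
      have e : μ.1.real (f ⁻¹' {0}) = ∫ x, (f ⁻¹' {0}).indicator (fun _ => (1 : ℝ)) x ∂μ.1 := by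
        rw [integral_indicator_const _ hZ]; simp
      rw [e]
      refine tendsto_integral_of_dominated_convergence (fun _ => 1)
        (fun n => (G n).continuous.measurable.aestronglyMeasurable) (integrable_const _)
        (fun n => Filter.Eventually.of_forall fun x => ?_)
        (Filter.Eventually.of_forall fun x => ?_)
      · rw [hG, Real.norm_eq_abs, abs_of_nonneg (le_max_left _ _)]
        refine max_le zero_le_one ?_
        have := mul_nonneg (Nat.cast_nonneg (α := ℝ) n) (f0 x)
        linarith
      · by_cases hx : f x = 0
        · have : x ∈ f ⁻¹' {0} := hx
          simp [hG, hx, this]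
        · have hx' : x ∉ f ⁻¹' {0} := hx
          have hpos : 0 < f x := lt_of_le_of_ne (f0 x) (Ne.symm hx)
          rw [Set.indicator_of_notMem hx']
          obtain ⟨N, hN⟩ := exists_nat_gt (1 / f x)
          refine tendsto_const_nhds.congr' ?_
          filter_upwards [Filter.eventually_ge_atTop N] with n hn
          rw [hG, eq_comm]
          refine max_eq_left ?_
          have h1 : (N : ℝ) ≤ n := by exact_mod_cast hn
          have h2 : 1 / f x < n := hN.trans_le h1
          rw [div_lt_iff₀ hpos] at h2
          linarith
    have : (fun μ : SubProb X => μ.1 (f ⁻¹' {0}))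
        = fun μ : SubProb X => ENNReal.ofReal (μ.1.real (f ⁻¹' {0})) := by
      funext μ
      have := fin μ
      simp
    rw [this]
    exact lim.ennreal_ofReal
  have huniv : Measurable (fun μ : SubProb X => μ.1 Set.univ) := by
    have := base (fun _ => 0) continuous_const (fun _ => le_rfl)
    simpa using this
  have bl : baire X ≤ ‹MeasurableSpace X› := baire_le
  have pis : IsPiSystem {s | ∃ f : X → ℝ, Continuous f ∧ (∀ x, 0 ≤ f x) ∧ s = f ⁻¹' {0}} := by
    rintro s ⟨f, hf, f0, rfl⟩ t ⟨g, hg, g0, rfl⟩ -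
    refine ⟨fun x => f x + g x, hf.add hg, fun x => add_nonneg (f0 x) (g0 x), ?_⟩
    ext x
    have := f0 x
    have := g0 x
    simp only [Set.mem_inter_iff, Set.mem_preimage, Set.mem_singleton_iff]
    constructor
    · rintro ⟨h1, h2⟩; rw [h1, h2, add_zero]
    · intro h; constructor <;> linarith
  induction A, hA using MeasurableSpace.induction_on_inter (m := baire X) rfl pis with
  | empty => simp
  | basic t ht =>
    obtain ⟨f, hf, f0, rfl⟩ := ht
    exact base f hf f0
  | compl t ht ih =>
    have : (fun μ : SubProb X => μ.1 tᶜ) = fun μ : SubProb X => μ.1 Set.univ - μ.1 t := by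
      funext μ
      have := fin μ
      exact measure_compl (bl _ ht) (measure_ne_top _ _)
    rw [this]
    exact huniv.sub ih
  | iUnion f hd hm ih =>
    have : (fun μ : SubProb X => μ.1 (⋃ i, f i)) = fun μ : SubProb X => ∑' i, μ.1 (f i) := by
      funext μ
      exact measure_iUnion hd fun i => bl _ (hm i)
    rw [this]
    exact Measurable.tsum ih

/-- Uniform approximability by functions of a finite Baire partition. -/
def FinApprox (X : Type) [TopologicalSpace X] (d : X → X → ℝ) : Prop :=
  ∀ ε : ℝ, 0 < ε → ∃ (ι : Type) (_ : Fintype ι) (p : X → ι) (D : ι → ι → ℝ),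
    (∀ i, MeasurableSet[baire X] (p ⁻¹' {i})) ∧ (∀ i j, 0 ≤ D i j) ∧
    ∀ x y, |d x y - D (p x) (p y)| ≤ ε

theorem FinApprox.measurable {X : Type} [TopologicalSpace X] [MeasurableSpace X] [BorelSpace X]
    {d : X → X → ℝ} (h : FinApprox X d) : Measurable (fun z : X × X => d z.1 z.2) := by
  choose ι fι p D hp hD hdD using fun n : ℕ => h (1 / ((n : ℝ) + 1)) Nat.one_div_pos_of_nat
  refine measurable_of_tendsto_metrizable
    (f := fun (n : ℕ) (z : X × X) => D n (p n z.1) (p n z.2)) (fun n => ?_) ?_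
  · let : MeasurableSpace (ι n) := ⊤
    have : DiscreteMeasurableSpace (ι n) := ⟨fun _ => trivial⟩
    have hpm : Measurable (p n) := measurable_to_countable' fun i => baire_le _ (hp n i)
    have : Measurable (fun q : ι n × ι n => D n q.1 q.2) := measurable_of_countable _
    exact this.comp (hpm.prodMap hpm)
  · rw [tendsto_pi_nhds]
    intro z
    rw [tendsto_iff_dist_tendsto_zero]
    refine squeeze_zero (fun _ => dist_nonneg) (fun n => ?_) tendsto_one_div_add_atTop_nhds_zero_nat
    rw [dist_comm, Real.dist_eq]
    exact hdD n z.1 z.2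

theorem FinApprox.step {X : Type} [TopologicalSpace X] [MeasurableSpace X] [BorelSpace X]
    {d : X → X → ℝ} (hd : GoodCost d) (h : FinApprox X d) :
    @FinApprox (SubProb X) (subProbWeakTop X) (fun μ ν => uwDist d μ.1 ν.1) := by
  intro ε hε
  obtain ⟨ι, fι, p, D, hp, hD, hdD⟩ := h (ε / 4) (by linarith)
  let : MeasurableSpace ι := ⊤
  have : DiscreteMeasurableSpace ι := ⟨fun _ => trivial⟩
  have hpm : Measurable p := measurable_to_countable' fun i => baire_le _ (hp i)
  obtain ⟨N, hN⟩ := exists_nat_gt (6 * (Fintype.card ι : ℝ) / ε)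
  have hN0 : (0 : ℝ) < N := lt_of_le_of_lt (by positivity) hN
  have real_le : ∀ (μ : SubProb X) (A : Set X), μ.1.real A ≤ 1 := fun μ A =>
    ENNReal.toReal_le_of_le_ofReal zero_le_one
      (by simpa using (measure_mono (Set.subset_univ A)).trans μ.2)
  let q : SubProb X → ι → Fin (N + 1) := fun μ i => ⟨⌊N * μ.1.real (p ⁻¹' {i})⌋₊, by
    refine Nat.lt_succ_of_le (Nat.floor_le_of_le ?_)
    exact mul_le_of_le_one_right hN0.le (real_le μ _)⟩
  have qeq : ∀ μ ν, q μ = q ν → ∀ i,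
      |μ.1.real (p ⁻¹' {i}) - ν.1.real (p ⁻¹' {i})| ≤ 1 / N := by
    intro μ ν h i
    have h1 : ⌊N * μ.1.real (p ⁻¹' {i})⌋₊ = ⌊N * ν.1.real (p ⁻¹' {i})⌋₊ :=
      congrArg Fin.val (congrFun h i)
    have a1 := Nat.floor_le (mul_nonneg hN0.le (measureReal_nonneg (μ := μ.1) (s := p ⁻¹' {i})))
    have a2 := Nat.floor_le (mul_nonneg hN0.le (measureReal_nonneg (μ := ν.1) (s := p ⁻¹' {i})))
    have b1 := Nat.lt_floor_add_one (N * μ.1.real (p ⁻¹' {i}))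
    have b2 := Nat.lt_floor_add_one (N * ν.1.real (p ⁻¹' {i}))
    rw [h1] at a1 b1
    rw [le_div_iff₀ hN0, ← abs_of_pos hN0, ← abs_mul, abs_le]
    constructor <;> nlinarith
  have : Nonempty (SubProb X) := ⟨⟨0, by simp⟩⟩
  let rep : (ι → Fin (N + 1)) → SubProb X := Function.invFun q
  have hrep : ∀ μ, q (rep (q μ)) = q μ := fun μ => Function.invFun_eq ⟨μ, rfl⟩
  refine ⟨ι → Fin (N + 1), Fintype.ofFinite _, q, fun k l => uwDist d (rep k).1 (rep l).1,
    ?_, ?_, ?_⟩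
  · intro k
    let tS : TopologicalSpace (SubProb X) := subProbWeakTop X
    let mS : MeasurableSpace (SubProb X) := baire (SubProb X)
    have : q ⁻¹' {k} = ⋂ i, (fun μ : SubProb X => ⌊N * μ.1.real (p ⁻¹' {i})⌋₊) ⁻¹' {(k i : ℕ)} := by
      ext μ
      simp only [Set.mem_preimage, Set.mem_singleton_iff, Set.mem_iInter, q, funext_iff,
        Fin.ext_iff]
    rw [this]
    refine MeasurableSet.iInter fun i => ?_
    have m1 : Measurable (fun μ : SubProb X => μ.1 (p ⁻¹' {i})) := baire_eval _ (hp i)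
    have m2 : Measurable (fun μ : SubProb X => ⌊N * μ.1.real (p ⁻¹' {i})⌋₊) :=
      Nat.measurable_floor.comp (m1.ennreal_toReal.const_mul (N : ℝ))
    exact m2 (measurableSet_singleton _)
  · exact fun k l => uwDist_nonneg hd (rep k).2 (rep l).2
  · intro μ ν
    have bound : 2 * (ε / 4) + 3 * Fintype.card ι * (1 / (N : ℝ)) ≤ ε := by
      rw [div_lt_iff₀ hε] at hN
      have : 3 * (Fintype.card ι : ℝ) * (1 / (N : ℝ)) ≤ ε / 2 := by
        rw [mul_one_div, div_le_iff₀ hN0]; linarith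
      linarith
    have s1 := uwDist_stable hd p hpm D hD (by linarith) (by positivity) hdD μ.2 (rep (q μ)).2 ν.2
      (rep (q ν)).2 (qeq _ _ (hrep μ).symm) (qeq _ _ (hrep ν).symm)
    have s2 := uwDist_stable hd p hpm D hD (by linarith) (by positivity) hdD (rep (q μ)).2 μ.2
      (rep (q ν)).2 ν.2 (qeq _ _ (hrep μ)) (qeq _ _ (hrep ν))
    rw [abs_le]
    constructor <;> linarith

theorem wdist_good (h : ℕ) : GoodCost (Wdist h) ∧ FinApprox (M h) (Wdist h) := by
  induction h with
  | zero =>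
    refine ⟨⟨fun _ _ => by simp [Wdist], fun _ _ => by simp [Wdist], fun _ _ => by simp [Wdist],
      by simp [Wdist]⟩, fun ε hε => ⟨Unit, inferInstance, fun _ => (), fun _ _ => 0,
        fun i => ?_, fun _ _ => le_rfl, fun _ _ => by simpa [Wdist] using hε.le⟩⟩
    have : (fun _ : M 0 => ()) ⁻¹' {i} = Set.univ := by ext; simp
    rw [this]
    exact @MeasurableSet.univ _ (baire (M 0))
  | succ h ih =>
    have hA : FinApprox (M (h + 1)) (Wdist (h + 1)) :=
      FinApprox.step (X := M h) ih.1 ih.2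
    exact ⟨⟨fun α β => uwDist_nonneg ih.1 (toSub α).2 (toSub β).2,
      fun α β => uwDist_le_one ih.1 (toSub α).2 (toSub β).2,
      fun α β => uwDist_symm ih.1 (toSub α).2 (toSub β).2, hA.measurable⟩, hA⟩

theorem nonempty_M (h : ℕ) : Nonempty (M h) := by
  cases h with
  | zero => exact ⟨()⟩
  | succ h => exact ⟨ofSub ⟨0, by simp⟩⟩

theorem idmFeat_continuous (m : MPNNModel) (B : ℕ → ℝ) (hB : ∀ t α, ‖idmFeat m t α‖ ≤ B t)
    (t : ℕ) : Continuous (idmFeat m t) := by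
  induction t with
  | zero => exact continuous_const
  | succ t ih =>
    have key : Continuous (fun α : M (t + 1) => ∫ β, idmFeat m t β ∂(toMeas α)) := by
      rw [← (EuclideanSpace.equiv (Fin (m.d t)) ℝ).toHomeomorph.comp_continuous_iff]
      refine continuous_pi fun i => ?_
      let G : BoundedContinuousFunction (M t) ℝ :=
        BoundedContinuousFunction.ofNormedAddCommGroup (fun β => idmFeat m t β i)
          ((EuclideanSpace.proj (𝕜 := ℝ) i).continuous.comp ih) (B t)
          (fun β => (PiLp.norm_apply_le _ i).trans (hB t β))
      have hc : Continuous (fun α : M (t + 1) => ∫ β, G β ∂(toMeas α)) :=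
        continuous_iff_le_induced.2 (iInf_le (fun f : BoundedContinuousFunction (M t) ℝ =>
          TopologicalSpace.induced (fun μ : SubProb (M t) => ∫ x, f x ∂μ.val) inferInstance) G)
      refine hc.congr fun α => ?_
      have : IsFiniteMeasure (toMeas α) := ⟨(toSub α).2.trans_lt ENNReal.one_lt_top⟩
      have hi : Integrable (idmFeat m t) (toMeas α) :=
        Integrable.of_bound ih.measurable.aestronglyMeasurable (B t)
          (Filter.Eventually.of_forall (hB t))
      exact (EuclideanSpace.proj (𝕜 := ℝ) i).integral_comp_comm hi
    exact (m.cont t).comp key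

theorem mpnnC_nonneg (c : ℕ → NNReal) (B : ℕ → ℝ) (hB : ∀ t, 0 ≤ B t) (t : ℕ) :
    0 ≤ mpnnC c B t := by
  induction t with
  | zero => exact le_rfl
  | succ t ih => exact mul_nonneg (c t).coe_nonneg (add_nonneg (hB t) ih)

theorem feat_lip (m : MPNNModel) (c : ℕ → NNReal) (B : ℕ → ℝ)
    (hc : ∀ t, LipschitzOnWith (c t) (m.φ t) (aggSet m t))
    (hB : ∀ t α, ‖idmFeat m t α‖ ≤ B t) (hB0 : ∀ t, 0 ≤ B t) (t : ℕ) (α β : M t) :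
    ‖idmFeat m t α - idmFeat m t β‖ ≤ mpnnC c B t * Wdist t α β := by
  induction t with
  | zero => simp [idmFeat, mpnnC]
  | succ t ih =>
    have h1 := (hc t).dist_le_mul _ ⟨α, rfl⟩ _ ⟨β, rfl⟩
    rw [dist_eq_norm, dist_eq_norm] at h1
    have h2 := lip_uwDist (wdist_good t).1 (idmFeat m t)
      (idmFeat_continuous m B hB t).measurable (hB0 t) (mpnnC_nonneg c B hB0 t) (hB t) ih
      (toSub α).2 (toSub β).2
    refine h1.trans ((mul_le_mul_of_nonneg_left h2 (c t).coe_nonneg).trans (le_of_eq ?_))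
    simp only [mpnnC, Wdist, toMeas]
    ring

theorem dW_bdd (α β : Minf) :
    BddAbove (Set.range fun h : ℕ => ((h : ℝ))⁻¹ * Wdist h (α.1 h) (β.1 h)) := by
  refine ⟨1, ?_⟩
  rintro _ ⟨h, rfl⟩
  exact mul_le_one₀ (Nat.cast_inv_le_one h) ((wdist_good h).1.nn _ _) ((wdist_good h).1.le1 _ _)

theorem dW_nonneg (α β : Minf) : 0 ≤ dWinf α β :=
  Real.iSup_nonneg fun h => mul_nonneg (by positivity) ((wdist_good h).1.nn _ _)

theorem dW_le_one (α β : Minf) : dWinf α β ≤ 1 :=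
  ciSup_le fun h =>
    mul_le_one₀ (Nat.cast_inv_le_one h) ((wdist_good h).1.nn _ _) ((wdist_good h).1.le1 _ _)

theorem proj_measurable (h : ℕ) : Measurable (fun a : Minf => a.1 h) :=
  ((continuous_apply h).comp continuous_subtype_val).measurable

theorem dW_measurable : Measurable (fun z : Minf × Minf => dWinf z.1 z.2) := by
  unfold dWinf
  refine Measurable.iSup fun h => Measurable.const_mul ?_ _
  exact (wdist_good h).1.meas.comp ((proj_measurable h).prodMap (proj_measurable h))

/-- MPNNs are Lipschitz w.r.t. the (unbalanced) Wasserstein metrics: on `M L` and on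
`P(M L)` with constants `C_φ` and `C_{(φ,ψ)}`, and on `M = M_∞` and `P(M)` with an
additional factor of `L`. Here `c t` is a Lipschitz constant of `φ t` on its set of
attainable inputs, `B t` bounds the norms of the `t`-th layer features, `cψ` is a
Lipschitz constant of `ψ` on its attainable inputs, and
`C_{(φ,ψ)} = cψ · (B L + C_φ)`. -/
theorem mpnn_lipschitz (L : ℕ) (m : MPNNModel) (c : ℕ → NNReal) (B : ℕ → ℝ)
    (hc : ∀ t, LipschitzOnWith (c t) (m.φ t) (aggSet m t))
    (hB : ∀ t α, ‖idmFeat m t α‖ ≤ B t)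
    (dout : ℕ) (ψ : EuclideanSpace ℝ (Fin (m.d L)) → EuclideanSpace ℝ (Fin dout))
    (cψ : NNReal) (hψ : LipschitzOnWith cψ ψ (probAgg m L)) :
    (∀ α β : M L,
      ‖idmFeat m L α - idmFeat m L β‖ ≤ mpnnC c B L * Wdist L α β) ∧
    (∀ μ ν : ProbM (M L),
      ‖ψ (∫ β, idmFeat m L β ∂μ.1) - ψ (∫ β, idmFeat m L β ∂ν.1)‖ ≤
        (cψ : ℝ) * (B L + mpnnC c B L) * wassersteinDist (Wdist L) μ.1 ν.1) ∧
    (∀ α β : Minf,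
      ‖idmFeat m L (α.1 L) - idmFeat m L (β.1 L)‖ ≤
        (L : ℝ) * mpnnC c B L * dWinf α β) ∧
    (∀ μ ν : ProbM Minf,
      ‖ψ (∫ β, idmFeat m L β ∂(μ.1.map fun a => a.1 L)) -
          ψ (∫ β, idmFeat m L β ∂(ν.1.map fun a => a.1 L))‖ ≤
        (L : ℝ) * ((cψ : ℝ) * (B L + mpnnC c B L)) * wassersteinDist dWinf μ.1 ν.1) := by
  have hB0 : ∀ t, 0 ≤ B t := fun t =>
    (norm_nonneg _).trans (hB t (Classical.choice (nonempty_M t)))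
  have hC0 := mpnnC_nonneg c B hB0
  have P1 := feat_lip m c B hc hB hB0 L
  have hfm := (idmFeat_continuous m B hB L).measurable
  have P3 : ∀ α β : Minf, ‖idmFeat m L (α.1 L) - idmFeat m L (β.1 L)‖ ≤
        (L : ℝ) * mpnnC c B L * dWinf α β := by
    intro α β
    refine (P1 _ _).trans ?_
    rcases Nat.eq_zero_or_pos L with h0 | h0
    · subst h0; simp [mpnnC]
    · have hL : (0 : ℝ) < L := by exact_mod_cast h0
      have h1 := le_ciSup (dW_bdd α β) L
      have h2 : Wdist L (α.1 L) (β.1 L) ≤ L * dWinf α β := by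
        rw [← inv_mul_le_iff₀ hL]; exact h1
      calc _ ≤ mpnnC c B L * (L * dWinf α β) := mul_le_mul_of_nonneg_left h2 (hC0 L)
        _ = _ := by ring
  refine ⟨P1, ?_, P3, ?_⟩
  · intro μ ν
    have := μ.2
    have := ν.2
    have h1 := hψ.dist_le_mul _ ⟨μ, rfl⟩ _ ⟨ν, rfl⟩
    rw [dist_eq_norm, dist_eq_norm] at h1
    have h2 := lip_wass (d := Wdist L) (idmFeat m L) hfm (hC0 L)
      (fun γ _ => (wdist_good L).1.integrable γ) (hB L) P1 (μ := μ.1) (ν := ν.1)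
    have h3 := wass_nonneg (wdist_good L).1.nn μ.1 ν.1
    refine h1.trans ?_
    rw [mul_assoc]
    refine mul_le_mul_of_nonneg_left (h2.trans ?_) cψ.coe_nonneg
    exact mul_le_mul_of_nonneg_right (by linarith [hB0 L]) h3
  · intro μ ν
    have := μ.2
    have := ν.2
    have hp := proj_measurable L
    have h1 := hψ.dist_le_mul _
      ⟨⟨μ.1.map fun a => a.1 L, Measure.isProbabilityMeasure_map hp.aemeasurable⟩, rfl⟩ _
      ⟨⟨ν.1.map fun a => a.1 L, Measure.isProbabilityMeasure_map hp.aemeasurable⟩, rfl⟩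
    rw [dist_eq_norm, dist_eq_norm] at h1
    have h2 := lip_wass (d := dWinf) (fun a : Minf => idmFeat m L (a.1 L)) (hfm.comp hp)
      (mul_nonneg (Nat.cast_nonneg L) (hC0 L))
      (fun γ _ => Integrable.of_bound dW_measurable.aestronglyMeasurable 1
        (Filter.Eventually.of_forall fun z => by
          rw [Real.norm_eq_abs, abs_of_nonneg (dW_nonneg _ _)]; exact dW_le_one _ _))
      (fun a => hB L _) P3 (μ := μ.1) (ν := ν.1)
    rw [← integral_map hp.aemeasurable hfm.aestronglyMeasurable,
      ← integral_map hp.aemeasurable hfm.aestronglyMeasurable] at h2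
    have h3 := wass_nonneg dW_nonneg μ.1 ν.1
    refine h1.trans ((mul_le_mul_of_nonneg_left h2 cψ.coe_nonneg).trans ?_)
    have h4 : 0 ≤ (cψ : ℝ) * L * B L * wassersteinDist dWinf μ.1 ν.1 :=
      mul_nonneg (mul_nonneg (mul_nonneg cψ.coe_nonneg (Nat.cast_nonneg L)) (hB0 L)) h3
    have h5 : (L : ℝ) * ((cψ : ℝ) * (B L + mpnnC c B L)) * wassersteinDist dWinf μ.1 ν.1
      = (cψ : ℝ) * (L * mpnnC c B L * wassersteinDist dWinf μ.1 ν.1)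
        + (cψ : ℝ) * L * B L * wassersteinDist dWinf μ.1 ν.1 := by ring
    rw [h5]
    exact le_add_of_nonneg_right h4

end
end

section
/- For every 0 ≤ L ≤ ∞, the set N_L^1 of real-valued MPNN feature functions is dense (with respect to the supremum norm) in C(M_L, ℝ), and the set NN_L^1 of real-valued graph-level MPNN functions is dense in C(P(M_L), ℝ), where P(M_L) is the compact space of Borel probability measures on M_L with the weak topology. -/
open MeasureTheory Set

noncomputable section

/-- An `L`-layer MPNN model: each of the used layer functions is Lipschitz on its
compact set of attainable aggregated inputs. -/
def LipModel (m : MPNNModel) (L : ℕ) : Prop :=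
  ∀ t, t < L → ∃ K : NNReal, LipschitzOnWith K (m.φ t) (aggSet m t)


/-- The set `N_t^1` of real-valued MPNN feature functions on `M t`. -/
def NSet (t : ℕ) : Set (M t → ℝ) :=
  {f | ∃ m : MPNNModel, LipModel m t ∧ m.d t = 1 ∧
    f = fun α => ∑ i, idmFeat m t α i}

/-- The set `N_∞^1` of real-valued MPNN feature functions on `M = M_∞`. -/
def NSetInf : Set (Minf → ℝ) :=
  {f | ∃ (t : ℕ) (m : MPNNModel), LipModel m t ∧ m.d t = 1 ∧
    f = fun α => ∑ i, idmFeat m t (α.1 t) i}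

instance (X : Type) [MeasurableSpace X] [TopologicalSpace X] :
    TopologicalSpace (ProbM X) := probWeakTop X

/-- The set `NN_L^1` of real-valued graph-level MPNN functions on `P(M L)`. -/
def NNSet (L : ℕ) : Set (ProbM (M L) → ℝ) :=
  {F | ∃ (m : MPNNModel) (ψ : EuclideanSpace ℝ (Fin (m.d L)) → ℝ) (K : NNReal),
    LipModel m L ∧ LipschitzWith K ψ ∧
    F = fun ν => ψ (∫ β, idmFeat m L β ∂ν.1)}

/-- The set `NN_∞^1` of real-valued graph-level MPNN functions on `P(M)`. -/
def NNSetInf : Set (ProbM Minf → ℝ) :=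
  {F | ∃ (t : ℕ) (m : MPNNModel) (ψ : EuclideanSpace ℝ (Fin (m.d t)) → ℝ) (K : NNReal),
    LipModel m t ∧ LipschitzWith K ψ ∧
    F = fun ν => ψ (∫ β, idmFeat m t β ∂(ν.1.map fun a => a.1 t))}

section Aux
set_option linter.unusedSectionVars false
open TopologicalSpace Filter Topology

variable {X : Type} [TopologicalSpace X] [MeasurableSpace X] [BorelSpace X]

instance subProbFin (μ : SubProb X) : IsFiniteMeasure μ.1 := ⟨μ.2.trans_lt (by simp)⟩
instance probFin (μ : ProbM X) : IsProbabilityMeasure μ.1 := μ.2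

theorem subProb_cont [CompactSpace X] (f : C(X, ℝ)) :
    Continuous[subProbWeakTop X, inferInstance] (fun μ : SubProb X => ∫ x, f x ∂μ.1) := by
  have : @Continuous _ _ (subProbWeakTop X) _ (fun μ : SubProb X => ∫ x, (BoundedContinuousFunction.mkOfCompact f) x ∂μ.1) :=
    continuous_iInf_dom (i := BoundedContinuousFunction.mkOfCompact f) continuous_induced_dom
  exact this

theorem prob_cont [CompactSpace X] (f : C(X, ℝ)) :
    Continuous (fun μ : ProbM X => ∫ x, f x ∂μ.1) := by
  have : Continuous (fun μ : ProbM X => ∫ x, (BoundedContinuousFunction.mkOfCompact f) x ∂μ.1) :=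
    continuous_iInf_dom (i := BoundedContinuousFunction.mkOfCompact f) continuous_induced_dom
  exact this

theorem subProb_compact [CompactSpace X] [T2Space X] :
    @CompactSpace (SubProb X) (subProbWeakTop X) := by
  let _ := subProbWeakTop X
  have hc := isCompact_setOfPred_finiteMeasure_le_of_compactSpace X 1
  have := isCompact_iff_compactSpace.1 hc
  let g : {μ : FiniteMeasure X | μ.mass ≤ 1} → SubProb X := fun μ => ⟨μ.1.1, by
    have h : μ.1.mass ≤ 1 := μ.2
    have h2 := ENNReal.coe_le_coe.2 h
    rw [FiniteMeasure.ennreal_mass] at h2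
    exact h2⟩
  have hg : Continuous g := by
    refine continuous_iInf_rng.2 fun f => continuous_induced_rng.2 ?_
    exact (FiniteMeasure.continuous_integral_boundedContinuousFunction f).comp continuous_subtype_val
  have hs : Function.Surjective g := by
    intro μ
    refine ⟨⟨⟨μ.1, inferInstance⟩, ?_⟩, rfl⟩
    have h := μ.2
    have h3 : ∀ ρ : FiniteMeasure X, (ρ : Measure X) univ ≤ 1 → ρ.mass ≤ 1 := by
      intro ρ hρ
      rw [← ENNReal.coe_le_coe, FiniteMeasure.ennreal_mass]
      exact hρ
    exact h3 _ h
  exact hs.compactSpace hg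

theorem prob_compact [CompactSpace X] [T2Space X] : CompactSpace (ProbM X) := by
  let g : ProbabilityMeasure X → ProbM X := fun μ => μ
  have hg : Continuous g := by
    refine continuous_iInf_rng.2 fun f => continuous_induced_rng.2 ?_
    exact ProbabilityMeasure.continuous_integral_boundedContinuousFunction f
  have hs : Function.Surjective g := fun μ => ⟨μ, rfl⟩
  exact hs.compactSpace hg

theorem meas_ext [CompactSpace X] [MetrizableSpace X] (μ ν : Measure X) [IsFiniteMeasure μ]
    [IsFiniteMeasure ν] (h : ∀ f : C(X, ℝ), ∫ x, f x ∂μ = ∫ x, f x ∂ν) : μ = ν :=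
  ext_of_forall_integral_eq_of_IsFiniteMeasure fun f => h f.toContinuousMap

theorem integ [CompactSpace X] (μ : Measure X) [IsFiniteMeasure μ] {f : X → ℝ}
    (hf : Continuous f) : Integrable f μ :=
  hf.integrable_of_hasCompactSupport (HasCompactSupport.of_compactSpace f)

theorem int_close [CompactSpace X] (μ : Measure X) [IsFiniteMeasure μ] (h1 : μ univ ≤ 1)
    {f g : X → ℝ} (hf : Continuous f) (hg : Continuous g) {δ : ℝ} (hδ : 0 ≤ δ)
    (h : ∀ x, |f x - g x| ≤ δ) : |∫ x, f x ∂μ - ∫ x, g x ∂μ| ≤ δ := by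
  rw [← integral_sub (integ μ hf) (integ μ hg)]
  have := norm_integral_le_of_norm_le_const (μ := μ) (f := fun x => f x - g x) (C := δ)
    (Eventually.of_forall h)
  refine this.trans ?_
  have : μ.real univ ≤ 1 := ENNReal.toReal_le_of_le_ofReal (by simp) (by simpa using h1)
  nlinarith

theorem subProb_metr [CompactSpace X] [MetrizableSpace X] :
    @MetrizableSpace (SubProb X) (subProbWeakTop X) := by
  let _ := subProbWeakTop X
  have : CompactSpace (SubProb X) := subProb_compact
  obtain ⟨u, hu⟩ := exists_dense_seq C(X, ℝ)
  let g : SubProb X → (ℕ → ℝ) := fun μ n => ∫ x, u n x ∂μ.1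
  have hg : Continuous g := continuous_pi fun n => subProb_cont (u n)
  have hi : Function.Injective g := by
    intro μ ν h
    apply Subtype.ext
    apply meas_ext
    intro f
    have hc : ∀ μ : SubProb X, Continuous fun f : C(X, ℝ) => ∫ x, f x ∂μ.1 := by
      intro μ
      refine LipschitzWith.continuous (K := 1) (LipschitzWith.of_dist_le_mul fun f g => ?_)
      rw [Real.dist_eq, NNReal.coe_one, one_mul]
      refine int_close μ.1 μ.2 f.continuous g.continuous dist_nonneg fun x => ?_
      rw [← Real.dist_eq]; exact ContinuousMap.dist_apply_le_dist x
    have := hu.equalizer (hc μ) (hc ν) (funext fun n => congrFun h n)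
    exact congrFun this f
  exact (hg.isClosedEmbedding hi).isEmbedding.metrizableSpace

theorem M_props (t : ℕ) : CompactSpace (M t) ∧ MetrizableSpace (M t) := by
  induction t with
  | zero => exact ⟨inferInstanceAs (CompactSpace Unit), inferInstanceAs (MetrizableSpace Unit)⟩
  | succ t ih =>
    have := ih.1
    have := ih.2
    exact ⟨subProb_compact (X := M t), subProb_metr (X := M t)⟩

instance (t : ℕ) : CompactSpace (M t) := (M_props t).1
instance (t : ℕ) : MetrizableSpace (M t) := (M_props t).2
instance toMeasFin {t : ℕ} (α : M (t+1)) : IsFiniteMeasure (toMeas α) := subProbFin (toSub α)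

theorem toMeas_le {t : ℕ} (α : M (t+1)) : toMeas α univ ≤ 1 := (toSub α).2
theorem toMeas_inj {t : ℕ} {α β : M (t+1)} (h : toMeas α = toMeas β) : α = β :=
  Subtype.ext h
theorem toMeas_cont {t : ℕ} (f : C(M t, ℝ)) :
    Continuous (fun α : M (t+1) => ∫ x, f x ∂(toMeas α)) := subProb_cont f

theorem M_cont_rng {Z : Type} [TopologicalSpace Z] {t : ℕ} (g : Z → M (t+1))
    (h : ∀ f : C(M t, ℝ), Continuous fun z => ∫ x, f x ∂(toMeas (g z))) : Continuous g :=
  continuous_iInf_rng.2 fun f => continuous_induced_rng.2 (h (BoundedContinuousFunction.toContinuousMap (α := M t) f))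

theorem projM_cont (t : ℕ) : Continuous (projM t) := by
  induction t with
  | zero => exact continuous_const
  | succ t ih =>
    refine M_cont_rng _ fun f => ?_
    have : (fun z => ∫ x, f x ∂(toMeas (projM (t+1) z))) =
        fun z => ∫ x, (f.comp ⟨projM t, ih⟩) x ∂(toMeas z) := by
      funext z
      exact integral_map ih.measurable.aemeasurable f.continuous.aestronglyMeasurable
    rw [this]
    exact toMeas_cont _

instance : MetrizableSpace Minf := by
  let _ : ∀ i, MetricSpace (M i) := fun i => metrizableSpaceMetric (M i)
  have : MetrizableSpace ((h : ℕ) → M h) := UniformSpace.metrizableSpace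
  exact IsEmbedding.subtypeVal.metrizableSpace
instance : CompactSpace Minf := by
  refine isCompact_iff_compactSpace.1 (IsClosed.isCompact ?_)
  show IsClosed {α : (h : ℕ) → M h | ∀ h, projM h (α (h+1)) = α h}
  simp only [Set.ofPred_forall]
  exact isClosed_iInter fun h => isClosed_eq ((projM_cont h).comp (continuous_apply _)) (continuous_apply _)

theorem int_coord [CompactSpace X] {n : ℕ} (μ : Measure X) [IsFiniteMeasure μ]
    {g : X → EuclideanSpace ℝ (Fin n)} (hg : Continuous g) (i : Fin n) :
    (∫ x, g x ∂μ) i = ∫ x, g x i ∂μ := by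
  have := (EuclideanSpace.proj (𝕜 := ℝ) (ι := Fin n) i).integral_comp_comm
    (hg.integrable_of_hasCompactSupport (μ := μ) (HasCompactSupport.of_compactSpace g))
  exact this.symm

theorem mv_contDiff {E : Type} [NormedAddCommGroup E] [NormedSpace ℝ E] {σ : Type}
    (s : E → σ → ℝ) (hs : ∀ c, ContDiff ℝ 1 fun z => s z c) (p : MvPolynomial σ ℝ) :
    ContDiff ℝ 1 fun z => MvPolynomial.eval (s z) p := by
  induction p using MvPolynomial.induction_on with
  | C a => simpa using contDiff_const
  | add p q hp hq => simpa using hp.add hq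
  | mul_X p c hp => simpa using hp.mul (hs c)

theorem poly_approx {Y : Type} [TopologicalSpace Y] [CompactSpace Y] [CompactSpace X]
    [MetrizableSpace X] (ms : Y → Measure X) [∀ y, IsFiniteMeasure (ms y)]
    (h1 : ∀ y, ms y univ ≤ 1) (hc : ∀ f : C(X, ℝ), Continuous fun y => ∫ x, f x ∂(ms y))
    (hinj : Function.Injective ms) {k : ℕ} (F : Fin k → C(Y, ℝ)) {ε : ℝ} (hε : 0 < ε) :
    ∃ (n : ℕ) (f : Fin n → C(X, ℝ)) (P : EuclideanSpace ℝ (Fin n) → EuclideanSpace ℝ (Fin k))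
      (δ : ℝ), 0 < δ ∧ ContDiff ℝ 1 P ∧ ∀ g : X → EuclideanSpace ℝ (Fin n), Continuous g →
        (∀ i x, |f i x - g x i| ≤ δ) → ∀ y i, |F i y - P (∫ x, g x ∂(ms y)) i| ≤ ε := by
  classical
  let J : C(X, ℝ) → C(Y, ℝ) := fun f => ⟨_, hc f⟩
  let A := (MvPolynomial.aeval (R := ℝ) J).range
  have hA : A.SeparatesPoints := by
    intro y z hyz
    by_contra hcon
    apply hyz
    apply hinj
    apply meas_ext
    intro f
    by_contra hne
    apply hcon
    exact ⟨_, ⟨J f, ⟨MvPolynomial.X f, by simp⟩, rfl⟩, hne⟩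
  have hp : ∀ i, ∃ p : MvPolynomial C(X, ℝ) ℝ, ∀ y, |MvPolynomial.aeval J p y - F i y| ≤ ε / 2 := by
    intro i
    obtain ⟨⟨_, p, rfl⟩, h⟩ :=
      ContinuousMap.exists_mem_subalgebra_near_continuousMap_of_separatesPoints A hA (F i) (ε/2)
        (half_pos hε)
    refine ⟨p, fun y => ?_⟩
    exact (ContinuousMap.norm_coe_le_norm (_ - F i) y).trans h.le
  choose p hp using hp
  have hev : ∀ (p : MvPolynomial C(X, ℝ) ℝ) y,
      MvPolynomial.aeval J p y = MvPolynomial.eval (fun c => J c y) p := by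
    intro p y
    induction p using MvPolynomial.induction_on with
    | C a => simp [algebraMap_apply]
    | add p q hp hq => simp [hp, hq]
    | mul_X p c hp => simp [hp]
  let T : Finset C(X, ℝ) := Finset.univ.biUnion fun i => (p i).vars
  let e := T.equivFin
  let s : EuclideanSpace ℝ (Fin T.card) → C(X, ℝ) → ℝ :=
    fun z c => if h : c ∈ T then z (e ⟨c, h⟩) else 0
  let P : EuclideanSpace ℝ (Fin T.card) → EuclideanSpace ℝ (Fin k) :=
    fun z => WithLp.toLp 2 fun i => MvPolynomial.eval (s z) (p i)
  have hs : ∀ c, ContDiff ℝ 1 fun z => s z c := by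
    intro c
    by_cases h : c ∈ T
    · simp only [s, h, dite_true]
      exact (EuclideanSpace.proj (𝕜 := ℝ) (ι := Fin T.card) (e ⟨c, h⟩)).contDiff
    · simp only [s, h, dite_false]
      exact contDiff_const
  have hP : ContDiff ℝ 1 P := by
    rw [contDiff_euclidean]
    exact fun i => mv_contDiff s hs (p i)
  let f : Fin T.card → C(X, ℝ) := fun j => (e.symm j).1
  let Z : Y → EuclideanSpace ℝ (Fin T.card) := fun y => WithLp.toLp 2 fun j => J (f j) y
  have hZ : Continuous Z := by
    refine (PiLp.continuous_toLp 2 _).comp (continuous_pi fun j => (J (f j)).continuous)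
  have hPZ : ∀ y i, P (Z y) i = MvPolynomial.aeval J (p i) y := by
    intro y i
    rw [hev]
    show MvPolynomial.eval (s (Z y)) (p i) = _
    refine MvPolynomial.eval₂Hom_congr' rfl ?_ rfl
    intro c hc _
    have hcT : c ∈ T := Finset.mem_biUnion.2 ⟨i, Finset.mem_univ _, hc⟩
    simp [s, hcT, Z, f]
  have hU := (isCompact_range hZ).uniformContinuousAt_of_continuousAt P
    (fun a _ => hP.continuous.continuousAt) (Metric.dist_mem_uniformity (half_pos hε))
  obtain ⟨η, hη, hU⟩ := Metric.mem_uniformity_dist.1 hU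
  have hn : (0:ℝ) < (T.card : ℝ) + 1 := by positivity
  refine ⟨T.card, f, P, η / (T.card + 1), by positivity, hP, fun g hg hfg y i => ?_⟩
  have hd : dist (Z y) (∫ x, g x ∂(ms y)) < η := by
    rw [EuclideanSpace.dist_eq, Real.sqrt_lt' hη]
    have : ∀ j ∈ Finset.univ, dist (Z y j) ((∫ x, g x ∂(ms y)) j) ^ 2 ≤ (η / (T.card + 1)) ^ 2 := by
      intro j _
      refine pow_le_pow_left₀ dist_nonneg ?_ 2
      rw [int_coord _ hg, Real.dist_eq]
      exact int_close (ms y) (h1 y) (f j).continuous (by fun_prop) (by positivity) (hfg j)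
    refine (Finset.sum_le_sum this).trans_lt ?_
    rw [Finset.sum_const, Finset.card_univ, Fintype.card_fin, nsmul_eq_mul, div_pow,
      ← mul_div_assoc, div_lt_iff₀ (by positivity)]
    have : (T.card : ℝ) < (T.card + 1) ^ 2 := by nlinarith [(Nat.cast_nonneg T.card : (0:ℝ) ≤ _)]
    have h2 : 0 < η ^ 2 := by positivity
    nlinarith
  have h2 : dist (P (Z y)) (P (∫ x, g x ∂(ms y))) < ε / 2 := hU hd ⟨y, rfl⟩
  have h3 : |P (Z y) i - P (∫ x, g x ∂(ms y)) i| ≤ ε / 2 := by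
    refine le_trans ?_ h2.le
    rw [dist_eq_norm]
    exact PiLp.norm_apply_le (P (Z y) - P (∫ x, g x ∂(ms y))) i
  have h4 := hp i y
  rw [← hPZ] at h4
  rw [abs_le] at *
  constructor <;> linarith [h3.1, h3.2, h4.1, h4.2]

abbrev Lev (s : ℕ) : Type := Σ n : ℕ, (M s → EuclideanSpace ℝ (Fin n))

def StepOK {s : ℕ} (a : Lev s) (b : Lev (s+1)) : Prop :=
  ∃ φ : EuclideanSpace ℝ (Fin a.1) → EuclideanSpace ℝ (Fin b.1), Continuous φ ∧
    (∃ K : NNReal, LipschitzOnWith K φ {z | ∃ α : M (s+1), z = ∫ β, a.2 β ∂(toMeas α)}) ∧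
    ∀ α, b.2 α = φ (∫ β, a.2 β ∂(toMeas α))

def Realz (t : ℕ) (b : Lev t) : Prop :=
  ∃ c : (s : ℕ) → Lev s, (∀ s, s < t → StepOK (c s) (c (s+1))) ∧ c t = b

theorem realize_s15 {t : ℕ} {b : Lev t} (h : Realz t b) :
    ∃ m : MPNNModel, LipModel m t ∧ (⟨m.d t, idmFeat m t⟩ : Lev t) = b := by
  obtain ⟨c, hc, rfl⟩ := h
  have : ∀ s, ∃ φ : EuclideanSpace ℝ (Fin (c s).1) → EuclideanSpace ℝ (Fin (c (s+1)).1),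
      Continuous φ ∧ (s < t →
    (∃ K : NNReal, LipschitzOnWith K φ {z | ∃ α : M (s+1), z = ∫ β, (c s).2 β ∂(toMeas α)}) ∧
    ∀ α, (c (s+1)).2 α = φ (∫ β, (c s).2 β ∂(toMeas α))) := by
    intro s
    by_cases hs : s < t
    · obtain ⟨φ, h1, h2⟩ := hc s hs
      exact ⟨φ, h1, fun _ => h2⟩
    · exact ⟨fun _ => 0, continuous_const, fun h => absurd h hs⟩
  choose φ h1 h2 using this
  let m : MPNNModel := ⟨fun s => (c s).1, (c 0).2 (), φ, h1⟩
  have hm : ∀ s, s ≤ t → idmFeat m s = (c s).2 := by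
    intro s
    induction s with
    | zero => intro _; funext α; cases α; rfl
    | succ s ih =>
      intro hs
      funext α
      rw [(h2 s hs).2 α, ← ih (by omega)]
      rfl
  refine ⟨m, fun s hs => ?_, ?_⟩
  · obtain ⟨K, hK⟩ := (h2 s hs).1
    refine ⟨K, ?_⟩
    unfold aggSet
    rw [hm s hs.le]
    exact hK
  · rw [hm t le_rfl]

theorem lip_compact {n k : ℕ} {P : EuclideanSpace ℝ (Fin n) → EuclideanSpace ℝ (Fin k)}
    (hP : ContDiff ℝ 1 P) {S : Set (EuclideanSpace ℝ (Fin n))} (hS : IsCompact S) :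
    ∃ K : NNReal, LipschitzOnWith K P S :=
  LocallyLipschitzOn.exists_lipschitzOnWith_of_compact hS hP.locallyLipschitz.locallyLipschitzOn

theorem int_cont {Y : Type} [TopologicalSpace Y] [CompactSpace X]
    (ms : Y → Measure X) [∀ y, IsFiniteMeasure (ms y)]
    (hc : ∀ f : C(X, ℝ), Continuous fun y => ∫ x, f x ∂(ms y)) {n : ℕ}
    {g : X → EuclideanSpace ℝ (Fin n)} (hg : Continuous g) :
    Continuous fun y => ∫ x, g x ∂(ms y) := by
  have : (fun y => ∫ x, g x ∂(ms y)) =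
      fun y => WithLp.toLp 2 fun i => ∫ x, g x i ∂(ms y) := by
    funext y
    ext i
    exact int_coord _ hg i
  rw [this]
  exact (PiLp.continuous_toLp 2 _).comp
    (continuous_pi fun j => hc ⟨fun x => g x j, by fun_prop⟩)

theorem approx (t : ℕ) : ∀ (k : ℕ) (F : Fin k → C(M t, ℝ)) (ε : ℝ), 0 < ε →
    ∃ g : M t → EuclideanSpace ℝ (Fin k), Realz t ⟨k, g⟩ ∧ Continuous g ∧
      ∀ i α, |F i α - g α i| ≤ ε := by
  induction t with
  | zero =>
    intro k F ε hε
    refine ⟨fun _ => WithLp.toLp 2 fun i => F i (), ⟨fun s => match s with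
      | 0 => ⟨k, fun _ => WithLp.toLp 2 fun i => F i ()⟩
      | s+1 => ⟨0, 0⟩, fun s hs => absurd hs (by omega), rfl⟩, continuous_const, ?_⟩
    intro i α
    cases α
    simpa using hε.le
  | succ t ih =>
    intro k F ε hε
    obtain ⟨n, f, P, δ, hδ, hP, H⟩ := poly_approx (fun α : M (t+1) => toMeas α) toMeas_le
      toMeas_cont (fun _ _ => toMeas_inj) F hε
    obtain ⟨g, ⟨c, hc, hct⟩, hg, hfg⟩ := ih n f δ hδ
    have hI := int_cont (fun α : M (t+1) => toMeas α) toMeas_cont hg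
    refine ⟨fun α => P (∫ x, g x ∂(toMeas α)), ?_, hP.continuous.comp hI,
      fun i α => H g hg hfg α i⟩
    let b : Lev (t+1) := ⟨k, fun α => P (∫ x, g x ∂(toMeas α))⟩
    refine ⟨Function.update c (t+1) b, ?_, by simp [b]⟩
    intro s hs
    rcases Nat.lt_succ_iff_lt_or_eq.1 hs with h | rfl
    · rw [Function.update_of_ne (by omega), Function.update_of_ne (by omega)]
      exact hc s h
    · rw [Function.update_of_ne (by omega), Function.update_self, hct]
      obtain ⟨K, hK⟩ := lip_compact hP (isCompact_range hI)
      refine ⟨P, hP.continuous, ⟨K, hK.mono ?_⟩, fun _ => rfl⟩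
      rintro z ⟨α, rfl⟩
      exact ⟨α, rfl⟩

theorem lev_sum {t : ℕ} {a b : Lev t} (h : a = b) (α : M t) : ∑ i, a.2 α i = ∑ i, b.2 α i := by
  subst h; rfl

theorem lev_psi {t : ℕ} {a b : Lev t} (h : a = b) (ψ : EuclideanSpace ℝ (Fin b.1) → ℝ)
    {K : NNReal} (hψ : LipschitzWith K ψ) : ∃ ψ' : EuclideanSpace ℝ (Fin a.1) → ℝ,
    LipschitzWith K ψ' ∧ ∀ μ : Measure (M t), ψ' (∫ x, a.2 x ∂μ) = ψ (∫ x, b.2 x ∂μ) := by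
  subst h; exact ⟨ψ, hψ, fun _ => rfl⟩

theorem lip_ext {n : ℕ} {P : EuclideanSpace ℝ (Fin n) → EuclideanSpace ℝ (Fin 1)}
    (hP : ContDiff ℝ 1 P) {S : Set (EuclideanSpace ℝ (Fin n))} (hS : IsCompact S) :
    ∃ (ψ : EuclideanSpace ℝ (Fin n) → ℝ) (K : NNReal), LipschitzWith K ψ ∧
      ∀ z ∈ S, P z 0 = ψ z := by
  obtain ⟨K, hK⟩ := lip_compact hP hS
  have : LipschitzOnWith K (fun z => P z 0) S := by
    refine LipschitzOnWith.of_dist_le_mul fun x hx y hy => ?_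
    refine le_trans ?_ (hK.dist_le_mul x hx y hy)
    rw [dist_eq_norm, dist_eq_norm]
    exact PiLp.norm_apply_le (P x - P y) 0
  obtain ⟨ψ, h1, h2⟩ := this.extend_real
  exact ⟨ψ, K, h1, h2⟩

theorem approx_N (t : ℕ) (F : C(M t, ℝ)) {ε : ℝ} (hε : 0 < ε) :
    ∃ f ∈ NSet t, ∀ α, |F α - f α| ≤ ε := by
  obtain ⟨g, hr, -, h⟩ := approx t 1 (fun _ => F) ε hε
  obtain ⟨m, hm, he⟩ := realize_s15 hr
  refine ⟨_, ⟨m, hm, congrArg Sigma.fst he, rfl⟩, fun α => ?_⟩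
  have := lev_sum he α
  simp only [Fin.sum_univ_one] at this
  rw [this]
  exact h 0 α

def ReprAt (t : ℕ) (F : C(Minf, ℝ)) : Prop := ∃ G : C(M t, ℝ), ∀ α, F α = G (α.1 t)

theorem repr_mono {s t : ℕ} (hst : s ≤ t) {F : C(Minf, ℝ)} (h : ReprAt s F) : ReprAt t F := by
  induction t, hst using Nat.le_induction with
  | base => exact h
  | succ t _ ih =>
    obtain ⟨G, hG⟩ := ih
    refine ⟨G.comp ⟨projM t, projM_cont t⟩, fun α => ?_⟩
    rw [hG, ← α.2 t]
    rfl

def reprAlg : Subalgebra ℝ C(Minf, ℝ) where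
  carrier := {F | ∃ t, ReprAt t F}
  mul_mem' := by
    rintro F G ⟨s, hs⟩ ⟨t, ht⟩
    obtain ⟨F', hF⟩ := repr_mono (le_max_left s t) hs
    obtain ⟨G', hG⟩ := repr_mono (le_max_right s t) ht
    exact ⟨_, F' * G', fun α => by simp [hF, hG]⟩
  add_mem' := by
    rintro F G ⟨s, hs⟩ ⟨t, ht⟩
    obtain ⟨F', hF⟩ := repr_mono (le_max_left s t) hs
    obtain ⟨G', hG⟩ := repr_mono (le_max_right s t) ht
    exact ⟨_, F' + G', fun α => by simp [hF, hG]⟩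
  algebraMap_mem' r := ⟨0, ContinuousMap.const _ r, fun α => rfl⟩

theorem proj_cont' (t : ℕ) : Continuous fun α : Minf => α.1 t :=
  (continuous_apply t).comp continuous_subtype_val

theorem reprAlg_sep : reprAlg.SeparatesPoints := by
  intro x y hxy
  have : ∃ t, x.1 t ≠ y.1 t := by
    by_contra! hcon
    exact hxy (Subtype.ext (funext hcon))
  obtain ⟨t, ht⟩ := this
  let _ : MetricSpace (M t) := metrizableSpaceMetric (M t)
  let G : C(M t, ℝ) := ⟨fun z => dist z (x.1 t), by fun_prop⟩
  refine ⟨_, ⟨G.comp ⟨_, proj_cont' t⟩, ⟨t, G, fun α => rfl⟩, rfl⟩, ?_⟩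
  show dist (x.1 t) (x.1 t) ≠ dist (y.1 t) (x.1 t)
  rw [dist_self]
  exact (dist_pos.2 ht.symm).ne

theorem inf_approx {k : ℕ} (F : Fin k → C(Minf, ℝ)) {ε : ℝ} (hε : 0 < ε) :
    ∃ (t : ℕ) (g : M t → EuclideanSpace ℝ (Fin k)), Realz t ⟨k, g⟩ ∧ Continuous g ∧
      ∀ i (α : Minf), |F i α - g (α.1 t) i| ≤ ε := by
  have : ∀ i, ∃ (t : ℕ) (G : C(Minf, ℝ)), ReprAt t G ∧ ∀ α, |F i α - G α| ≤ ε / 2 := by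
    intro i
    obtain ⟨⟨G, t, ht⟩, h⟩ :=
      ContinuousMap.exists_mem_subalgebra_near_continuousMap_of_separatesPoints reprAlg
        reprAlg_sep (F i) (ε/2) (half_pos hε)
    refine ⟨t, G, ht, fun α => ?_⟩
    rw [abs_sub_comm]
    exact (ContinuousMap.norm_coe_le_norm (_ - F i) α).trans h.le
  choose t G hG h using this
  choose G' hG' using fun i => repr_mono (Finset.le_sup (f := t) (Finset.mem_univ i)) (hG i)
  obtain ⟨g, hr, hg, hh⟩ := approx _ k G' (ε/2) (half_pos hε)
  refine ⟨_, g, hr, hg, fun i α => ?_⟩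
  have h1 := h i α
  have h2 := hh i (α.1 _)
  rw [← hG'] at h2
  rw [abs_le] at *
  constructor <;> linarith [h1.1, h1.2, h2.1, h2.2]

end Aux

/-- Universal approximation: for every `0 ≤ L ≤ ∞`, the MPNN feature functions
`N_L^1` are dense in `C(M L, ℝ)` w.r.t. the supremum norm, and the graph-level MPNN
functions `NN_L^1` are dense in `C(P(M L), ℝ)`. -/
theorem mpnn_universal_approximation :
    (∀ L : ℕ,
      (∀ F : M L → ℝ, Continuous F → ∀ ε : ℝ, 0 < ε →
        ∃ f ∈ NSet L, ∀ α, |F α - f α| ≤ ε) ∧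
      (∀ F : ProbM (M L) → ℝ, Continuous F → ∀ ε : ℝ, 0 < ε →
        ∃ f ∈ NNSet L, ∀ ν, |F ν - f ν| ≤ ε)) ∧
    ((∀ F : Minf → ℝ, Continuous F → ∀ ε : ℝ, 0 < ε →
        ∃ f ∈ NSetInf, ∀ α, |F α - f α| ≤ ε) ∧
      (∀ F : ProbM Minf → ℝ, Continuous F → ∀ ε : ℝ, 0 < ε →
        ∃ f ∈ NNSetInf, ∀ ν, |F ν - f ν| ≤ ε)) := by
  refine ⟨fun L => ⟨fun F hF ε hε => approx_N L ⟨F, hF⟩ hε, fun F hF ε hε => ?_⟩,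
    fun F hF ε hε => ?_, fun F hF ε hε => ?_⟩
  · have := prob_compact (X := M L)
    obtain ⟨n, f, P, δ, hδ, hP, H⟩ := poly_approx (fun ν : ProbM (M L) => ν.1)
      (fun ν => by simp) prob_cont Subtype.val_injective (fun _ : Fin 1 => ⟨F, hF⟩) hε
    obtain ⟨g, hr, hg, hfg⟩ := approx L n f δ hδ
    obtain ⟨ψ, K, hψ, hPψ⟩ := lip_ext hP
      (isCompact_range (int_cont (fun ν : ProbM (M L) => ν.1) prob_cont hg))
    obtain ⟨m, hm, he⟩ := realize_s15 hr
    obtain ⟨ψ', hψ', hh⟩ := lev_psi he ψ hψ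
    refine ⟨_, ⟨m, ψ', K, hm, hψ', rfl⟩, fun ν => ?_⟩
    have h1 := H g hg hfg ν 0
    rw [hPψ _ ⟨ν, rfl⟩] at h1
    have h2 := hh ν.1
    dsimp only at h2
    rw [h2]
    exact h1
  · obtain ⟨t, g, hr, hg, h⟩ := inf_approx (fun _ : Fin 1 => (⟨F, hF⟩ : C(Minf, ℝ))) hε
    obtain ⟨m, hm, he⟩ := realize_s15 hr
    refine ⟨_, ⟨t, m, hm, congrArg Sigma.fst he, rfl⟩, fun α => ?_⟩
    have := lev_sum he (α.1 t)
    simp only [Fin.sum_univ_one] at this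
    rw [this]
    exact h 0 α
  · have := prob_compact (X := Minf)
    obtain ⟨n, f, P, δ, hδ, hP, H⟩ := poly_approx (fun ν : ProbM Minf => ν.1)
      (fun ν => by simp) prob_cont Subtype.val_injective (fun _ : Fin 1 => ⟨F, hF⟩) hε
    obtain ⟨t, g, hr, hg, hfg⟩ := inf_approx f hδ
    have hg' : Continuous fun α : Minf => g (α.1 t) := hg.comp (proj_cont' t)
    obtain ⟨ψ, K, hψ, hPψ⟩ := lip_ext hP
      (isCompact_range (int_cont (fun ν : ProbM Minf => ν.1) prob_cont hg'))
    obtain ⟨m, hm, he⟩ := realize_s15 hr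
    obtain ⟨ψ', hψ', hh⟩ := lev_psi he ψ hψ
    refine ⟨_, ⟨t, m, ψ', K, hm, hψ', rfl⟩, fun ν => ?_⟩
    have h1 := H _ hg' hfg ν 0
    rw [hPψ _ ⟨ν, rfl⟩] at h1
    have h2 := hh (ν.1.map fun a => a.1 t)
    dsimp only at h2
    rw [h2, integral_map (proj_cont' t).measurable.aemeasurable hg.aestronglyMeasurable]
    exact h1

end
end
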